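/- arXiv:1404.0873 — 3 statements merged into one kernel-verified Lean document; each statement's English description precedes it below -/
import Mathlib

section
/- Let p be an odd prime, let (G,N) be a pair of finite p-groups with N powerfully embedded in G, and let σ : N* → G be a covering pair of (G,N) (a relative central extension with N* a finite p-group whose kernel A satisfies A ≤ Z(N*,G) ∩ [N*,G]). Then for every nonnegative integer n, [𝕌_n([N*,G]), G] ≤ 𝕌₁(𝕌_n([N*,G])). (Lemma 3.9(i) of the paper.) -/
/-!
The action turns `N* ⋊ G` into a finite `p`-group `Γ` in which `N*` is normal, and `[H, G]`
becomes the ordinary commutator `⁅H, Γ⁆`. Write `H^p` for `pPow p 1 H`.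
The statement is then about the normal subgroup
`K = ⁅N*, Γ⁆` of `Γ`.

The engine is `comm_pPow_le`: if `⁅L, Γ⁆ ≤ L'` and `p` is odd, then
`⁅L^p, Γ⁆ ≤ L'^p ⁅⁅L', Γ⁆, Γ⁆`. Indeed, modulo the right-hand side, `g x ^ p g⁻¹ = (x c) ^ p` with
`c = ⁅x⁻¹, g⁆ ∈ L'` of order dividing `p` and `⁅c, x⁆` central of order dividing `p`, so
`(x c) ^ p = x ^ p c ^ p = x ^ p`. Since `Γ` is nilpotent, a term `⁅V, Γ⁆` may be discarded from an
inclusion `V ≤ W ⁅V, Γ⁆`, so `⁅L', Γ⁆ ≤ ⁅L^p, Γ⁆` yields `⁅L', Γ⁆ ≤ L'^p` (`comm_le_pPow`).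

* With `L = N*` and `L' = K`: `σ` maps `K` onto `⁅N, G⁆ ≤ N^p`, so `K ≤ (N*)^p ker σ`, and
  `ker σ` is central in `Γ`; hence `⁅K, Γ⁆ ≤ K^p`.
* With `L = Q n` and `L' = Q (n + 1)`, where `Q n = iterPow p K n` is given by
  `Q 0 = K` and `Q (n + 1) = (Q n)^p`: by induction
  `⁅Q n, Γ⁆ ≤ Q (n + 1)` for all `n`.

Finally `Q n` is the subgroup generated by the `p ^ n`-th powers of elements of `K`: the `p`-th
power map induces a surjective homomorphism `Q n / Q (n + 1) → Q (n + 1) / Q (n + 2)`, so every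
element of `Q n` is congruent to some `x ^ p ^ n`, `x ∈ K`, modulo `Q (n + 1) = (Q n)^p`, which
consists of non-generators of `Q n`.
-/

/-- The iterated commutator subgroup `[N, _k G]`. -/
def iterCommG {G : Type*} [Group G] (N : Subgroup G) : ℕ → Subgroup G
  | 0 => N
  | k + 1 => ⁅iterCommG N k, (⊤ : Subgroup G)⁆

/-- `𝕌_i(H)`: the subgroup generated by all `p^i`-th powers of elements of `H`. -/
def pPow {G : Type*} [Group G] (p i : ℕ) (H : Subgroup G) : Subgroup G :=
  Subgroup.closure {x | ∃ h ∈ H, x = h ^ p ^ i}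

/-- A relative central extension of the pair `(G, N)`. -/
structure RelCentralExt {M G : Type*} [Group M] [Group G] (σ : M →* G) (N : Subgroup G) where
  /-- the action of `G` on `M`, written `m ↦ m^g` in the paper -/
  act : M → G → M
  act_mul : ∀ m n g, act (m * n) g = act m g * act n g
  act_one : ∀ m, act m 1 = m
  act_act : ∀ m g h, act (act m g) h = act m (g * h)
  range_eq : σ.range = N
  sigma_act : ∀ m g, σ (act m g) = g⁻¹ * σ m * g
  act_sigma : ∀ m m₁, act m (σ m₁) = m₁⁻¹ * m * m₁
  ker_act : ∀ a ∈ σ.ker, ∀ g : G, act a g = a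

namespace RelCentralExt

variable {M G : Type*} [Group M] [Group G] {σ : M →* G} {N : Subgroup G}

/-- The `G`-commutator `[m, g] = m⁻¹ · m^g`. -/
def cmt (E : RelCentralExt σ N) (m : M) (g : G) : M := m⁻¹ * E.act m g

/-- The subgroup `[M', G]` generated by all `G`-commutators `[m, g]`, `m ∈ M'`, `g ∈ G`. -/
def commSub (E : RelCentralExt σ N) (M' : Subgroup M) : Subgroup M :=
  Subgroup.closure {x | ∃ m ∈ M', ∃ g : G, x = E.cmt m g}

/-- The iterated subgroup `[M', _n G]`. -/
def iterComm (E : RelCentralExt σ N) (M' : Subgroup M) : ℕ → Subgroup M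
  | 0 => M'
  | n + 1 => E.commSub (E.iterComm M' n)

end RelCentralExt

/-! ### Powers of products and of subgroups -/

section Powers

open scoped commutatorElement

variable {Γ : Type*} [Group Γ]

theorem pow_mul_eq_of_comm {x y z : Γ} (h : y * x = z * x * y) (hzy : Commute z y)
    (n : ℕ) : y ^ n * x = z ^ n * x * y ^ n := by
  induction n with
  | zero => simp
  | succ n ih =>
    have h1 : y * z ^ n = z ^ n * y := ((hzy.pow_left n).eq).symm
    calc y ^ (n + 1) * x = y * (y ^ n * x) := by rw [pow_succ', mul_assoc]
      _ = (y * z ^ n) * x * y ^ n := by rw [ih]; group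
      _ = z ^ n * (y * x) * y ^ n := by rw [h1]; group
      _ = z ^ (n + 1) * x * y ^ (n + 1) := by rw [h, pow_succ, pow_succ']; group

theorem mul_pow_of_comm {x y z : Γ} (h : y * x = z * x * y) (hzx : Commute z x)
    (hzy : Commute z y) (n : ℕ) : (x * y) ^ n = x ^ n * y ^ n * z ^ n.choose 2 := by
  induction n with
  | zero => simp
  | succ n ih =>
    have h1 : z ^ n.choose 2 * (x * y) = x * y * z ^ n.choose 2 :=
      ((hzx.mul_right hzy).pow_left _).eq
    have h2 : z ^ n * (x * y ^ (n + 1)) = x * y ^ (n + 1) * z ^ n :=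
      ((hzx.mul_right (hzy.pow_right _)).pow_left _).eq
    calc (x * y) ^ (n + 1) = x ^ n * y ^ n * (z ^ n.choose 2 * (x * y)) := by
          rw [pow_succ, ih, mul_assoc]
      _ = x ^ n * (y ^ n * x) * y * z ^ n.choose 2 := by rw [h1]; group
      _ = x ^ n * (z ^ n * (x * y ^ (n + 1))) * z ^ n.choose 2 := by
          rw [pow_mul_eq_of_comm h hzy, pow_succ y n]; group
      _ = x ^ (n + 1) * y ^ (n + 1) * (z ^ n * z ^ n.choose 2) := by
          rw [h2, pow_succ x n]; group
      _ = _ := by rw [← pow_add, Nat.choose_succ_succ' n 1, Nat.choose_one_right]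

/-- The correction term `z ^ p.choose 2` is trivial because `p ∣ p.choose 2` for odd `p`. -/
theorem mul_pow_odd {x y z : Γ} {p : ℕ} (hodd : Odd p) (h : y * x = z * x * y)
    (hzx : Commute z x) (hzy : Commute z y) (hz : z ^ p = 1) :
    (x * y) ^ p = x ^ p * y ^ p := by
  rw [mul_pow_of_comm h hzx hzy]
  obtain ⟨k, rfl⟩ := hodd
  have : (2 * k + 1).choose 2 = (2 * k + 1) * k := by
    rw [Nat.choose_two_right, Nat.add_sub_cancel]
    exact Nat.div_eq_of_eq_mul_left (by norm_num) (by ring)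
  rw [this, pow_mul, hz, one_pow, mul_one]

theorem commute_mk_of_mem {D : Subgroup Γ} [D.Normal] {x y : Γ} (h : ⁅x, y⁆ ∈ D) :
    Commute (x : Γ ⧸ D) (y : Γ ⧸ D) := by
  have h1 := (QuotientGroup.eq_one_iff (N := D) _).2 h
  rw [commutatorElement_def] at h1
  exact commutatorElement_eq_one_iff_commute.1 h1

theorem mem_of_commute_mk {D : Subgroup Γ} [D.Normal] {x y : Γ}
    (h : Commute (x : Γ ⧸ D) (y : Γ ⧸ D)) : ⁅x, y⁆ ∈ D := by
  rw [← QuotientGroup.eq_one_iff (N := D), commutatorElement_def]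
  exact commutatorElement_eq_one_iff_commute.2 h

theorem mk_swap (D : Subgroup Γ) [D.Normal] (x y : Γ) :
    (y : Γ ⧸ D) * x = ((⁅y, x⁆ : Γ) : Γ ⧸ D) * x * y := by
  rw [← QuotientGroup.mk_mul, ← QuotientGroup.mk_mul, ← QuotientGroup.mk_mul, commutatorElement_def]
  group

theorem pPow_le_iff {p i : ℕ} {H W : Subgroup Γ} :
    pPow p i H ≤ W ↔ ∀ h ∈ H, h ^ p ^ i ∈ W := by
  rw [pPow, Subgroup.closure_le]
  constructor
  · exact fun h x hx => h ⟨x, hx, rfl⟩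
  · rintro h _ ⟨x, hx, rfl⟩
    exact h x hx

theorem pow_mem_pPow {p i : ℕ} {H : Subgroup Γ} {h : Γ} (hh : h ∈ H) : h ^ p ^ i ∈ pPow p i H :=
  Subgroup.subset_closure ⟨h, hh, rfl⟩

theorem pow_mem_pPow_one {p : ℕ} {H : Subgroup Γ} {h : Γ} (hh : h ∈ H) : h ^ p ∈ pPow p 1 H := by
  simpa using pow_mem_pPow (p := p) (i := 1) hh

theorem pPow_le_self {p i : ℕ} {H : Subgroup Γ} : pPow p i H ≤ H :=
  pPow_le_iff.2 fun _ hh => H.pow_mem hh _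

theorem map_pPow {Δ : Type*} [Group Δ] (f : Γ →* Δ) (p i : ℕ) (H : Subgroup Γ) :
    (pPow p i H).map f = pPow p i (H.map f) := by
  apply le_antisymm
  · rw [Subgroup.map_le_iff_le_comap, pPow_le_iff]
    intro h hh
    rw [Subgroup.mem_comap, map_pow]
    exact pow_mem_pPow (Subgroup.mem_map_of_mem f hh)
  · rw [pPow_le_iff]
    rintro _ ⟨h, hh, rfl⟩
    rw [← map_pow]
    exact Subgroup.mem_map_of_mem f (pow_mem_pPow hh)

instance pPow_normal (p i : ℕ) (H : Subgroup Γ) [hH : H.Normal] : (pPow p i H).Normal := by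
  refine ⟨fun n hn g => ?_⟩
  suffices pPow p i H ≤ (pPow p i H).comap (MulAut.conj g).toMonoidHom from this hn
  rw [pPow_le_iff]
  intro h hh
  rw [Subgroup.mem_comap, map_pow]
  exact pow_mem_pPow (hH.conj_mem h hh g)

end Powers

/-! ### Commutators with the whole group -/

section PGroups

open scoped commutatorElement

variable {Γ : Type*} [Group Γ]

theorem sup_comm_le {A B C : Subgroup Γ} [C.Normal] (hA : ⁅A, (⊤ : Subgroup Γ)⁆ ≤ C)
    (hB : ⁅B, (⊤ : Subgroup Γ)⁆ ≤ C) : ⁅A ⊔ B, (⊤ : Subgroup Γ)⁆ ≤ C := by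
  -- the elements that are central modulo `C` form a subgroup
  let Z : Subgroup Γ := (Subgroup.center (Γ ⧸ C)).comap (QuotientGroup.mk' C)
  have key : ∀ X : Subgroup Γ, ⁅X, (⊤ : Subgroup Γ)⁆ ≤ C ↔ X ≤ Z := by
    intro X
    rw [Subgroup.commutator_le]
    constructor
    · intro h x hx
      rw [Subgroup.mem_comap, Subgroup.mem_center_iff]
      intro g
      obtain ⟨g, rfl⟩ := QuotientGroup.mk_surjective g
      exact (commute_mk_of_mem (h x hx g trivial)).eq.symm
    · intro h x hx g _
      have := Subgroup.mem_center_iff.1 (h hx) (g : Γ ⧸ C)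
      exact mem_of_commute_mk this.symm
  rw [key] at *
  exact sup_le hA hB

/-- In a nilpotent group, `⁅V, Γ⁆` can be discarded from an inclusion `V ≤ W ⁅V, Γ⁆`. -/
theorem le_of_le_sup_comm [Group.IsNilpotent Γ] {V W : Subgroup Γ} [W.Normal]
    (h : V ≤ W ⊔ ⁅V, (⊤ : Subgroup Γ)⁆) : V ≤ W := by
  let S : ℕ → Subgroup Γ := Subgroup.lowerCentralSeries (⊤ : Subgroup Γ)
  have hS : ∀ n, V ≤ W ⊔ S n := by
    intro n
    induction n with
    | zero => exact le_sup_of_le_right (le_top.trans_eq rfl)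
    | succ n ih =>
      have : ⁅S n, (⊤ : Subgroup Γ)⁆ ≤ S (n + 1) := le_rfl
      refine h.trans (sup_le le_sup_left ?_)
      refine (Subgroup.commutator_mono ih le_rfl).trans (sup_comm_le ?_ ?_)
      · exact (Subgroup.commutator_le_left W ⊤).trans le_sup_left
      · exact this.trans le_sup_right
  obtain ⟨n, hn⟩ := Subgroup.nilpotent_iff_lowerCentralSeries.1 ‹Group.IsNilpotent Γ›
  have h0 := hS n
  rwa [show S n = ⊥ from hn, sup_bot_eq] at h0

theorem comm_pPow_le {p : ℕ} (hodd : Odd p) {L L' : Subgroup Γ} [L'.Normal]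
    (h : ⁅L, (⊤ : Subgroup Γ)⁆ ≤ L') :
    ⁅pPow p 1 L, (⊤ : Subgroup Γ)⁆ ≤
      pPow p 1 L' ⊔ ⁅⁅L', (⊤ : Subgroup Γ)⁆, (⊤ : Subgroup Γ)⁆ := by
  set D := pPow p 1 L' ⊔ ⁅⁅L', (⊤ : Subgroup Γ)⁆, (⊤ : Subgroup Γ)⁆ with hD
  have main : ∀ x ∈ L, ∀ g : Γ, Commute ((x ^ p : Γ) : Γ ⧸ D) (g : Γ ⧸ D) := by
    intro x hx g
    set c : Γ := ⁅x⁻¹, g⁆ with hc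
    have hcL : c ∈ L' := h (Subgroup.commutator_mem_commutator (L.inv_mem hx) trivial)
    have hz : ∀ w : Γ, Commute ((⁅c, x⁆ : Γ) : Γ ⧸ D) (w : Γ ⧸ D) := fun w =>
      commute_mk_of_mem <| (le_sup_right : _ ≤ D) <| Subgroup.commutator_mem_commutator
        (Subgroup.commutator_mem_commutator hcL trivial) trivial
    have hcp : (c : Γ ⧸ D) ^ p = 1 := by
      rw [← QuotientGroup.mk_pow, QuotientGroup.eq_one_iff]
      exact (le_sup_left : _ ≤ D) (pow_mem_pPow_one hcL)
    have hzp : ((⁅c, x⁆ : Γ) : Γ ⧸ D) ^ p = 1 := by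
      have := pow_mul_eq_of_comm (mk_swap D x c) (hz c) p
      rw [hcp, one_mul, mul_one] at this
      exact mul_eq_right.1 this.symm
    have hpow := mul_pow_odd hodd (mk_swap D x c) (hz x) (hz c) hzp
    have hconj : x * c = g * x * g⁻¹ := by rw [hc, commutatorElement_def]; group
    rw [hcp, mul_one, ← QuotientGroup.mk_mul, hconj, ← QuotientGroup.mk_pow, conj_pow] at hpow
    exact (mul_inv_eq_iff_eq_mul.1 hpow).symm
  have hle : pPow p 1 L ≤ (Subgroup.center (Γ ⧸ D)).comap (QuotientGroup.mk' D) := by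
    rw [pPow_le_iff]
    intro x hx
    rw [pow_one, Subgroup.mem_comap, Subgroup.mem_center_iff]
    intro g
    obtain ⟨g, rfl⟩ := QuotientGroup.mk_surjective g
    exact (main x hx g).eq.symm
  rw [Subgroup.commutator_le]
  intro x hx g _
  exact mem_of_commute_mk (Subgroup.mem_center_iff.1 (hle hx) (g : Γ ⧸ D)).symm

theorem comm_le_pPow [Group.IsNilpotent Γ] {p : ℕ} (hodd : Odd p) {L L' : Subgroup Γ} [L'.Normal]
    (h : ⁅L, (⊤ : Subgroup Γ)⁆ ≤ L')
    (h' : ⁅L', (⊤ : Subgroup Γ)⁆ ≤ ⁅pPow p 1 L, (⊤ : Subgroup Γ)⁆) :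
    ⁅L', (⊤ : Subgroup Γ)⁆ ≤ pPow p 1 L' :=
  le_of_le_sup_comm (h'.trans (comm_pPow_le hodd h))

/-- The `p`-th powers of a finite `p`-group `Q` are non-generators: `Q = R Q^p` forces `R = Q`,
since a proper subgroup lies in a normal subgroup of index `p`. -/
theorem le_of_le_sup_pPow [Finite Γ] {p : ℕ} (hp : p.Prime) (hΓ : IsPGroup p Γ)
    {Q R : Subgroup Γ} (hRQ : R ≤ Q) (h : Q ≤ R ⊔ pPow p 1 Q) : Q ≤ R := by
  have := Fact.mk hp
  by_contra hne
  obtain ⟨a, ha⟩ := IsPGroup.iff_card.1 (hΓ.to_subgroup R)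
  obtain ⟨b, hb⟩ := IsPGroup.iff_card.1 (hΓ.to_subgroup Q)
  have hlt : Nat.card R < Nat.card Q :=
    lt_of_not_ge fun hge => hne (Subgroup.eq_of_le_of_card_ge hRQ hge).ge
  rw [ha, hb] at hlt
  have hab : a < b := (Nat.pow_lt_pow_iff_right hp.one_lt).1 hlt
  obtain ⟨b, rfl⟩ : ∃ b', b = b' + 1 := ⟨b - 1, by omega⟩
  have hcR : Nat.card (R.subgroupOf Q) = p ^ a := by
    rw [← ha]; exact Nat.card_congr (Subgroup.subgroupOfEquivOfLe hRQ).toEquiv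
  obtain ⟨H, hH, hRH⟩ := Sylow.exists_subgroup_card_pow_prime_le p
    (hb ▸ pow_dvd_pow p b.le_succ) (R.subgroupOf Q) hcR (Nat.lt_succ_iff.1 hab)
  have hidx : H.index = p := by
    have := H.card_mul_index
    rw [hH, hb, pow_succ] at this
    exact Nat.eq_of_mul_eq_mul_left (pow_pos hp.pos b) this
  have : H.Normal := Subgroup.normal_of_index_eq_minFac_card (by
    rw [hidx, hb, hp.pow_minFac b.succ_ne_zero])
  have hQH : Q ≤ H.map Q.subtype := by
    refine h.trans (sup_le (fun x hx => ?_) (pPow_le_iff.2 fun x hx => ?_))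
    · exact ⟨⟨x, hRQ hx⟩, hRH hx, rfl⟩
    · exact ⟨⟨x, hx⟩ ^ p ^ 1, by simpa [hidx] using H.pow_index_mem ⟨x, hx⟩, rfl⟩
  have hHtop : H = ⊤ := by
    rw [eq_top_iff]
    rintro ⟨x, hx⟩ -
    obtain ⟨y, hy, hyx⟩ := hQH hx
    have : y = ⟨x, hx⟩ := Subtype.ext hyx
    exact this ▸ hy
  rw [hHtop, Subgroup.index_top] at hidx
  exact hp.ne_one hidx.symm

/-- The series `K, K^p, (K^p)^p, …` of iterated `p`-th power subgroups. -/
def iterPow (p : ℕ) (K : Subgroup Γ) : ℕ → Subgroup Γ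
  | 0 => K
  | n + 1 => pPow p 1 (iterPow p K n)

instance iterPow_normal (p : ℕ) (K : Subgroup Γ) [K.Normal] : ∀ n, (iterPow p K n).Normal
  | 0 => ‹_›
  | n + 1 => by
    have := iterPow_normal p K n
    exact pPow_normal p 1 _

theorem comm_iterPow_le [Group.IsNilpotent Γ] {p : ℕ} (hodd : Odd p) {K : Subgroup Γ} [K.Normal]
    (h : ⁅K, (⊤ : Subgroup Γ)⁆ ≤ pPow p 1 K) (n : ℕ) :
    ⁅iterPow p K n, (⊤ : Subgroup Γ)⁆ ≤ iterPow p K (n + 1) := by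
  induction n with
  | zero => exact h
  | succ n ih => exact comm_le_pPow hodd ih le_rfl

theorem pow_mem_iterPow {p : ℕ} {K : Subgroup Γ} {x : Γ} (hx : x ∈ K) (n : ℕ) :
    x ^ p ^ n ∈ iterPow p K n := by
  induction n with
  | zero => simpa [iterPow] using hx
  | succ n ih =>
    rw [pow_succ, pow_mul]
    exact pow_mem_pPow_one ih

/-- The `p`-th power map is multiplicative from `Q n = iterPow p K n` to `Q (n + 1) / Q (n + 2)`. -/
theorem mk_mul_pow [Group.IsNilpotent Γ] {p : ℕ} (hodd : Odd p) {K : Subgroup Γ} [K.Normal]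
    (h : ⁅K, (⊤ : Subgroup Γ)⁆ ≤ pPow p 1 K) {n : ℕ} {x : Γ} (hx : x ∈ iterPow p K n) (y : Γ) :
    (((y * x) ^ p : Γ) : Γ ⧸ iterPow p K (n + 2)) = ((y ^ p : Γ) : Γ ⧸ _) * ((x ^ p : Γ) : Γ ⧸ _) := by
  have hc : ⁅x, y⁆ ∈ iterPow p K (n + 1) :=
    comm_iterPow_le hodd h n (Subgroup.commutator_mem_commutator hx trivial)
  have hz : ∀ w : Γ, Commute ((⁅x, y⁆ : Γ) : Γ ⧸ iterPow p K (n + 2)) (w : Γ ⧸ _) := fun w =>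
    commute_mk_of_mem
      (comm_iterPow_le hodd h (n + 1) (Subgroup.commutator_mem_commutator hc trivial))
  have hzp : ((⁅x, y⁆ : Γ) : Γ ⧸ iterPow p K (n + 2)) ^ p = 1 := by
    rw [← QuotientGroup.mk_pow, QuotientGroup.eq_one_iff]
    exact pow_mem_pPow_one hc
  exact mul_pow_odd hodd (mk_swap _ y x) (hz y) (hz x) hzp

/-- Every element of `Q (n + 1)` is congruent modulo `Q (n + 2)`, where `Q = iterPow p K`, to the `p`-th power of an
element of `Q n`. -/
theorem exists_pow_mk [Group.IsNilpotent Γ] {p : ℕ} (hodd : Odd p) {K : Subgroup Γ} [K.Normal]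
    (h : ⁅K, (⊤ : Subgroup Γ)⁆ ≤ pPow p 1 K) {n : ℕ} {w : Γ} (hw : w ∈ iterPow p K (n + 1)) :
    ∃ z ∈ iterPow p K n, ((z ^ p : Γ) : Γ ⧸ iterPow p K (n + 2)) = w := by
  change w ∈ Subgroup.closure _ at hw
  induction hw using Subgroup.closure_induction with
  | mem w hw =>
    obtain ⟨z, hz, rfl⟩ := hw
    exact ⟨z, hz, by rw [pow_one]⟩
  | one => exact ⟨1, one_mem _, by rw [one_pow]⟩
  | mul a b _ _ ha hb =>
    obtain ⟨y, hy, hyz⟩ := ha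
    obtain ⟨z, hz, hb⟩ := hb
    exact ⟨y * z, mul_mem hy hz, by rw [mk_mul_pow hodd h hz, hyz, hb, QuotientGroup.mk_mul]⟩
  | inv a _ ha =>
    obtain ⟨y, hy, ha⟩ := ha
    exact ⟨y⁻¹, inv_mem hy, by rw [inv_pow, QuotientGroup.mk_inv, ha, QuotientGroup.mk_inv]⟩

theorem exists_pow_pow_mk [Group.IsNilpotent Γ] {p : ℕ} (hodd : Odd p) {K : Subgroup Γ} [K.Normal]
    (h : ⁅K, (⊤ : Subgroup Γ)⁆ ≤ pPow p 1 K) (n : ℕ) :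
    ∀ w ∈ iterPow p K n, ∃ x ∈ K, ((x ^ p ^ n : Γ) : Γ ⧸ iterPow p K (n + 1)) = w := by
  induction n with
  | zero => exact fun w hw => ⟨w, hw, by simp⟩
  | succ n ih =>
    intro w hw
    obtain ⟨z, hz, hyz⟩ := exists_pow_mk hodd h hw
    obtain ⟨x, hx, hxz⟩ := ih z hz
    refine ⟨x, hx, ?_⟩
    have ht : (x ^ p ^ n)⁻¹ * z ∈ iterPow p K (n + 1) := QuotientGroup.eq.1 hxz
    have htn : (x ^ p ^ n)⁻¹ * z ∈ iterPow p K n := pPow_le_self ht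
    have h1 := mk_mul_pow hodd h htn (x ^ p ^ n)
    have h2 : ((((x ^ p ^ n)⁻¹ * z) ^ p : Γ) : Γ ⧸ iterPow p K (n + 2)) = 1 :=
      (QuotientGroup.eq_one_iff _).2 (pow_mem_pPow_one ht)
    rw [mul_inv_cancel_left, hyz, h2, mul_one, ← pow_mul, ← pow_succ] at h1
    exact h1.symm

theorem iterPow_eq_pPow [Finite Γ] {p : ℕ} (hp : p.Prime) (hodd : Odd p) (hΓ : IsPGroup p Γ)
    {K : Subgroup Γ} [K.Normal] (h : ⁅K, (⊤ : Subgroup Γ)⁆ ≤ pPow p 1 K) (n : ℕ) :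
    iterPow p K n = pPow p n K := by
  have := Fact.mk hp
  have : Group.IsNilpotent Γ := hΓ.isNilpotent
  have hle : pPow p n K ≤ iterPow p K n := pPow_le_iff.2 fun x hx => pow_mem_iterPow hx n
  refine le_antisymm (le_of_le_sup_pPow hp hΓ hle fun w hw => ?_) hle
  obtain ⟨x, hx, hxw⟩ := exists_pow_pow_mk hodd h n w hw
  rw [← mul_inv_cancel_left (x ^ p ^ n) w]
  exact mul_mem (Subgroup.mem_sup_left (pow_mem_pPow hx))
    (Subgroup.mem_sup_right (QuotientGroup.eq.1 hxw))

end PGroups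

/-! ### The semidirect product of a relative central extension -/

namespace RelCentralExt

open scoped commutatorElement

variable {M G : Type*} [Group M] [Group G] {σ : M →* G} {N : Subgroup G}

/-- The right action `m ↦ m^g` as a homomorphism into `MulAut M`; the inverse turns it into a
left action. -/
def toMulAut (E : RelCentralExt σ N) : G →* MulAut M where
  toFun g :=
    { toFun := fun m => E.act m g⁻¹
      invFun := fun m => E.act m g
      left_inv := fun m => by simp [E.act_act, E.act_one]
      right_inv := fun m => by simp [E.act_act, E.act_one]
      map_mul' := fun m n => E.act_mul m n _ }
  map_one' := by ext m; simp [E.act_one]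
  map_mul' g h := by ext m; simp [E.act_act]

theorem toMulAut_apply (E : RelCentralExt σ N) (g : G) (m : M) :
    E.toMulAut g m = E.act m g⁻¹ := rfl

/-- The conjugation action of `(m', g)` on `M` is that of the single element
`g⁻¹ * σ(m')⁻¹` of `G`. -/
theorem commutator_inl (E : RelCentralExt σ N) (m : M) (y : M ⋊[E.toMulAut] G) :
    ⁅(SemidirectProduct.inl m : M ⋊[E.toMulAut] G), y⁆ =
      SemidirectProduct.inl (E.cmt m⁻¹ (y.right⁻¹ * σ y.left⁻¹)) := by
  have hconj : y * SemidirectProduct.inl m⁻¹ * y⁻¹ =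
      SemidirectProduct.inl (E.act m⁻¹ (y.right⁻¹ * σ y.left⁻¹)) := by
    rw [← E.act_act, E.act_sigma, inv_inv, ← toMulAut_apply, map_mul, map_mul,
      SemidirectProduct.inl_aut]
    nth_rewrite 1 2 [← SemidirectProduct.inl_left_mul_inr_right y]
    simp only [mul_inv_rev, map_inv]
    group
  rw [cmt, inv_inv, map_mul, ← hconj, commutatorElement_def, map_inv]
  group

theorem comm_map_inl (E : RelCentralExt σ N) (H : Subgroup M) :
    ⁅H.map (SemidirectProduct.inl : M →* M ⋊[E.toMulAut] G), (⊤ : Subgroup (M ⋊[E.toMulAut] G))⁆ =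
      (E.commSub H).map SemidirectProduct.inl := by
  apply le_antisymm
  · rw [Subgroup.commutator_le]
    rintro _ ⟨m, hm, rfl⟩ y -
    rw [commutator_inl]
    exact Subgroup.mem_map_of_mem _
      (Subgroup.subset_closure ⟨m⁻¹, H.inv_mem hm, _, rfl⟩)
  · rw [Subgroup.map_le_iff_le_comap, commSub, Subgroup.closure_le]
    rintro _ ⟨m, hm, g, rfl⟩
    have h := E.commutator_inl m⁻¹ (SemidirectProduct.inr g⁻¹)
    simp only [SemidirectProduct.right_inr, SemidirectProduct.left_inr, inv_inv, inv_one, map_one,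
      mul_one] at h
    rw [SetLike.mem_coe, Subgroup.mem_comap, ← h]
    exact Subgroup.commutator_mem_commutator
      (Subgroup.mem_map_of_mem _ (H.inv_mem hm)) trivial

/-- If `[N, G] ≤ N^p`, then `[M, G] ≤ M^p ker σ`. -/
theorem commSub_top_le (E : RelCentralExt σ N) {p : ℕ}
    (hpe : ⁅N, (⊤ : Subgroup G)⁆ ≤ pPow p 1 N) :
    E.commSub ⊤ ≤ pPow p 1 ⊤ ⊔ σ.ker := by
  rw [← Subgroup.comap_map_eq, map_pPow, ← MonoidHom.range_eq_map, E.range_eq, commSub,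
    Subgroup.closure_le]
  rintro _ ⟨m, -, g, rfl⟩
  rw [SetLike.mem_coe, Subgroup.mem_comap]
  apply hpe
  have : σ (E.cmt m g) = ⁅(σ m)⁻¹, g⁻¹⁆ := by
    rw [cmt, map_mul, E.sigma_act, map_inv, commutatorElement_def]; group
  rw [this]
  refine Subgroup.commutator_mem_commutator (N.inv_mem ?_) trivial
  rw [← E.range_eq]
  exact ⟨m, rfl⟩

theorem commSub_ker (E : RelCentralExt σ N) : E.commSub σ.ker = ⊥ := by
  rw [eq_bot_iff, commSub, Subgroup.closure_le]
  rintro _ ⟨a, ha, g, rfl⟩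
  simp [cmt, E.ker_act a ha g]

end RelCentralExt

/-- Lemma 3.9(i): let `p` be an odd prime, `(G, N)` a pair of finite `p`-groups with `N`
powerfully embedded in `G` (`[N, G] ≤ 𝕌₁(N)`), and `σ : N* → G` a covering pair of
`(G, N)` (a relative central extension with `N*` a finite `p`-group and
`ker σ ≤ Z(N*, G) ∩ [N*, G]`; the `Z(N*, G)` part is axiom (iv) of a relative central
extension). Then `[𝕌ₙ([N*, G]), G] ≤ 𝕌₁(𝕌ₙ([N*, G]))` for every `n ≥ 0`. -/
theorem stmt_14 {G : Type*} [Group G] [Finite G] (p : ℕ) (hp : p.Prime) (hodd : Odd p)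
    (hG : IsPGroup p G) (N : Subgroup G) (hN : N.Normal)
    (hpe : ⁅N, (⊤ : Subgroup G)⁆ ≤ pPow p 1 N)
    {Nstar : Type*} [Group Nstar] [Finite Nstar] (σ : Nstar →* G)
    (E : RelCentralExt σ N) (hNstar : IsPGroup p Nstar)
    (hker : σ.ker ≤ E.commSub ⊤) :
    ∀ n : ℕ, E.commSub (pPow p n (E.commSub ⊤)) ≤ pPow p 1 (pPow p n (E.commSub ⊤)) := by
  intro n
  have := Fact.mk hp
  let ι : Nstar →* Nstar ⋊[E.toMulAut] G := SemidirectProduct.inl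
  have hι : Function.Injective ι := SemidirectProduct.inl_injective
  have hΓ : IsPGroup p (Nstar ⋊[E.toMulAut] G) := by
    obtain ⟨a, ha⟩ := IsPGroup.iff_card.1 hNstar
    obtain ⟨b, hb⟩ := IsPGroup.iff_card.1 hG
    exact IsPGroup.of_card (n := a + b) (by rw [SemidirectProduct.card, ha, hb, pow_add])
  have : Finite (Nstar ⋊[E.toMulAut] G) := Finite.of_equiv _ SemidirectProduct.equivProd.symm
  have : Group.IsNilpotent (Nstar ⋊[E.toMulAut] G) := hΓ.isNilpotent
  have : ((⊤ : Subgroup Nstar).map ι).Normal := by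
    rw [← MonoidHom.range_eq_map, SemidirectProduct.range_inl_eq_ker_rightHom]
    infer_instance
  have hK : (E.commSub ⊤).map ι = ⁅(⊤ : Subgroup Nstar).map ι, ⊤⁆ := (E.comm_map_inl ⊤).symm
  have : ((E.commSub ⊤).map ι).Normal := by
    rw [hK]
    infer_instance
  have hK' : ⁅(E.commSub ⊤).map ι, ⊤⁆ ≤ pPow p 1 ((E.commSub ⊤).map ι) := by
    refine comm_le_pPow hodd hK.ge ?_
    refine (Subgroup.commutator_mono (Subgroup.map_mono (E.commSub_top_le hpe)) le_rfl).trans ?_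
    rw [Subgroup.map_sup, map_pPow]
    refine sup_comm_le le_rfl ?_
    rw [E.comm_map_inl, E.commSub_ker, Subgroup.map_bot]
    exact bot_le
  have hfin := comm_iterPow_le hodd hK' n
  rw [iterPow, iterPow_eq_pPow hp hodd hΓ hK' n, ← map_pPow, ← map_pPow, E.comm_map_inl] at hfin
  exact (Subgroup.map_le_map_iff_of_injective hι).1 hfin
end

section
/- Let p = 2, let (G,N) be a pair of finite 2-groups with N powerfully embedded in G, and let σ : N* → G be a covering pair of (G,N) (a relative central extension with N* a finite 2-group whose kernel A satisfies A ≤ Z(N*,G) ∩ [N*,G]). Then for every nonnegative integer n, [𝕌_n([N*,G]), G] ≤ 𝕌₂(𝕌_n([N*,G])). (Lemma 3.9(ii) of the paper.) -/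
namespace PowerfulCover

open Subgroup
open scoped commutatorElement

/-! ### Power subgroups and commutator subgroups -/

section General

variable {Γ Δ : Type*} [Group Γ] [Group Δ]

theorem map_pPow (f : Γ →* Δ) (p i : ℕ) (H : Subgroup Γ) :
    (pPow p i H).map f = pPow p i (H.map f) := by
  unfold pPow
  rw [MonoidHom.map_closure]
  congr 1
  ext y
  constructor
  · rintro ⟨_, ⟨h, hh, rfl⟩, rfl⟩
    exact ⟨f h, mem_map_of_mem f hh, map_pow f h _⟩
  · rintro ⟨_, ⟨h, hh, rfl⟩, rfl⟩
    exact ⟨h ^ p ^ i, ⟨h, hh, rfl⟩, map_pow f h _⟩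

instance pPow_normal (p i : ℕ) (H : Subgroup Γ) [hH : H.Normal] : (pPow p i H).Normal := by
  constructor
  intro x hx g
  have h : (pPow p i H).map (MulAut.conj g).toMonoidHom ≤ pPow p i H := by
    rw [map_pPow]
    apply Subgroup.closure_mono
    rintro _ ⟨_, ⟨h, hh, rfl⟩, rfl⟩
    exact ⟨g * h * g⁻¹, hH.conj_mem h hh g, rfl⟩
  exact h (mem_map_of_mem _ hx)

theorem pow_mem_pPow {p i : ℕ} {H : Subgroup Γ} {x : Γ} (hx : x ∈ H) :
    x ^ p ^ i ∈ pPow p i H := subset_closure ⟨x, hx, rfl⟩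

theorem pPow_le_iff {p i : ℕ} {H K : Subgroup Γ} :
    pPow p i H ≤ K ↔ ∀ x ∈ H, x ^ p ^ i ∈ K := by
  unfold pPow
  rw [closure_le]
  constructor
  · intro h x hx
    exact h ⟨x, hx, rfl⟩
  · rintro h _ ⟨x, hx, rfl⟩
    exact h x hx

theorem pPow_le (p i : ℕ) (H : Subgroup Γ) : pPow p i H ≤ H :=
  pPow_le_iff.2 fun _ hx => pow_mem hx _

theorem pPow_two_le (H : Subgroup Γ) : pPow 2 2 H ≤ pPow 2 1 (pPow 2 1 H) := by
  refine pPow_le_iff.2 fun x hx => ?_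
  have := pow_mem_pPow (p := 2) (i := 1) (pow_mem_pPow (p := 2) (i := 1) hx)
  rwa [← pow_mul] at this

theorem map_commutator_top {f : Γ →* Δ} (hf : Function.Surjective f) (H : Subgroup Γ) :
    (⁅H, (⊤ : Subgroup Γ)⁆).map f = ⁅H.map f, (⊤ : Subgroup Δ)⁆ := by
  rw [map_commutator, ← MonoidHom.range_eq_map, MonoidHom.range_eq_top.2 hf]

theorem exists_conj_eq {N : Subgroup Γ} {x : Γ} (hx : x ∈ N) (g : Γ) :
    ∃ c ∈ ⁅N, (⊤ : Subgroup Γ)⁆, g * x * g⁻¹ = x * c :=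
  ⟨⁅x⁻¹, g⁆, commutator_mem_commutator (inv_mem hx) (mem_top g), by
    rw [commutatorElement_def]; group⟩

theorem mem_center_of_conj {x : Γ} (h : ∀ g : Γ, g * x * g⁻¹ = x) : x ∈ center Γ :=
  mem_center_iff.2 fun g => mul_inv_eq_iff_eq_mul.1 (h g)

/-- A group generated by central elements of order dividing `2` has exponent dividing `2`. -/
theorem sq_eq_one_of_mem_closure {s : Set Γ} (hs : ∀ x ∈ s, ∀ y ∈ closure s, Commute x y)
    (h2 : ∀ x ∈ s, x ^ 2 = 1) {x : Γ} (hx : x ∈ closure s) : x ^ 2 = 1 := by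
  have key : x ^ 2 = 1 ∧ ∀ y ∈ closure s, Commute x y := by
    induction hx using closure_induction with
    | mem x hx => exact ⟨h2 x hx, hs x hx⟩
    | one => exact ⟨one_pow 2, fun y _ => Commute.one_left y⟩
    | mul x y hx hy ihx ihy =>
      exact ⟨by rw [(ihx.2 y hy).mul_pow, ihx.1, ihy.1, one_mul],
        fun z hz => (ihx.2 z hz).mul_left (ihy.2 z hz)⟩
    | inv x hx ih => exact ⟨by rw [inv_pow, ih.1, inv_one], fun z hz => (ih.2 z hz).inv_left⟩
  exact key.1

theorem eq_bot_of_le_commutator [Group.IsNilpotent Γ] {L : Subgroup Γ}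
    (h : L ≤ ⁅L, (⊤ : Subgroup Γ)⁆) : L = ⊥ := by
  obtain ⟨n, hn⟩ := Subgroup.nilpotent_iff_lowerCentralSeries.1 (inferInstance : Group.IsNilpotent Γ)
  have key : ∀ k, L ≤ (⊤ : Subgroup Γ).lowerCentralSeries k := by
    intro k
    induction k with
    | zero => exact le_top
    | succ k ih => exact h.trans (commutator_mono ih le_rfl)
  exact le_bot_iff.1 (hn ▸ key n)

/-- A central subgroup of a finite `2`-group that is generated by its squares is trivial: all its
elements are squares of its elements, hence `2 ^ k`-th powers for every `k`. -/
theorem eq_bot_of_le_pPow [Finite Γ] (hΓ : IsPGroup 2 Γ) {L : Subgroup Γ} (hL : L ≤ center Γ)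
    (h : L ≤ pPow 2 1 L) : L = ⊥ := by
  have hsq : ∀ x ∈ L, ∃ y ∈ L, y ^ 2 = x := by
    intro x hx
    have hx' := h hx
    clear hx
    unfold pPow at hx'
    induction hx' using closure_induction with
    | mem x hx => obtain ⟨y, hy, rfl⟩ := hx; exact ⟨y, hy, by simp⟩
    | one => exact ⟨1, one_mem _, one_pow 2⟩
    | mul x y _ _ ihx ihy =>
      obtain ⟨a, ha, rfl⟩ := ihx
      obtain ⟨b, hb, rfl⟩ := ihy
      have hab : Commute a b := (mem_center_iff.1 (hL hb) a)
      exact ⟨a * b, mul_mem ha hb, hab.mul_pow 2⟩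
    | inv x _ ih =>
      obtain ⟨a, ha, rfl⟩ := ih
      exact ⟨a⁻¹, inv_mem ha, inv_pow a 2⟩
  have hpow : ∀ k : ℕ, ∀ x ∈ L, ∃ y ∈ L, y ^ 2 ^ k = x := by
    intro k
    induction k with
    | zero => exact fun x hx => ⟨x, hx, by simp⟩
    | succ k ih =>
      intro x hx
      obtain ⟨y, hy, rfl⟩ := ih x hx
      obtain ⟨z, hz, rfl⟩ := hsq y hy
      exact ⟨z, hz, by rw [← pow_mul, pow_succ']⟩
  obtain ⟨k, hk⟩ := isPGroup_iff_exists_pow_pow_eq_one.1 hΓ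
  rw [eq_bot_iff]
  intro x hx
  obtain ⟨y, -, rfl⟩ := hpow k x hx
  exact mem_bot.2 (hk y)

end General

/-! ### Powerfully embedded subgroups of finite `2`-groups -/

section Core

universe u

variable {Γ : Type u} [Group Γ]

/-- Frattini-type reduction: to prove `L ≤ T` in a finite `2`-group it is enough to work modulo
`T`, `𝕌₁(L)` and `[L, Γ]`, because `L` cannot be generated by `T ∩ L`, its squares and its
commutators with `Γ` unless it lies in `T`. -/
theorem le_of_forall_quotient [Finite Γ] (hΓ : IsPGroup 2 Γ) {L T : Subgroup Γ} [L.Normal]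
    [T.Normal]
    (h : ∀ (Δ : Type u) [Group Δ] (f : Γ →* Δ), Function.Surjective f → T.map f = ⊥ →
      pPow 2 1 (L.map f) = ⊥ → ⁅L.map f, (⊤ : Subgroup Δ)⁆ = ⊥ → L.map f = ⊥) :
    L ≤ T := by
  have map_mk_bot : ∀ (Q H : Subgroup Γ) [Q.Normal], H.map (QuotientGroup.mk' Q) = ⊥ ↔ H ≤ Q := by
    intro Q H _
    rw [Subgroup.map_eq_bot_iff, QuotientGroup.ker_mk']
  have h1 : L ≤ T ⊔ ⁅L, (⊤ : Subgroup Γ)⁆ ⊔ pPow 2 1 L := by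
    set Q := T ⊔ ⁅L, (⊤ : Subgroup Γ)⁆ ⊔ pPow 2 1 L with hQ
    have hs := QuotientGroup.mk'_surjective Q
    refine (map_mk_bot Q L).1 (h _ (QuotientGroup.mk' Q) hs ?_ ?_ ?_)
    · exact (map_mk_bot Q T).2 (le_sup_left.trans le_sup_left)
    · rw [← map_pPow]
      exact (map_mk_bot Q _).2 le_sup_right
    · rw [← map_commutator_top hs]
      exact (map_mk_bot Q _).2 (le_sup_right.trans le_sup_left)
  have h2 : L ≤ T ⊔ ⁅L, (⊤ : Subgroup Γ)⁆ := by
    set Q := T ⊔ ⁅L, (⊤ : Subgroup Γ)⁆ with hQ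
    have hs := QuotientGroup.mk'_surjective Q
    refine (map_mk_bot Q L).1 (eq_bot_of_le_pPow (hΓ.to_quotient Q) ?_ ?_)
    · rw [← commutator_top_right_eq_bot_iff_le_center, ← map_commutator_top hs]
      exact (map_mk_bot Q _).2 le_sup_right
    · have := map_mono (f := QuotientGroup.mk' Q) h1
      rwa [Subgroup.map_sup, (map_mk_bot Q Q).2 le_rfl, bot_sup_eq, map_pPow] at this
  have hs := QuotientGroup.mk'_surjective T
  have : Fact (Nat.Prime 2) := ⟨Nat.prime_two⟩
  have : Group.IsNilpotent (Γ ⧸ T) := (hΓ.to_quotient T).isNilpotent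
  refine (map_mk_bot T L).1 (eq_bot_of_le_commutator ?_)
  have := map_mono (f := QuotientGroup.mk' T) h2
  rwa [Subgroup.map_sup, (map_mk_bot T T).2 le_rfl, bot_sup_eq, map_commutator_top hs] at this

theorem pow_eq_one_of_pPow_eq_bot {i : ℕ} {H : Subgroup Γ} (h : pPow 2 i H = ⊥) {x : Γ}
    (hx : x ∈ H) : x ^ 2 ^ i = 1 :=
  mem_bot.1 (h ▸ pow_mem_pPow hx)

/-- The only part of the Hall–Petrescu collection formula that is needed: the error term of
`(x * c) ^ 4` is a power of `d ^ 2` when `d = [c, x]` is central. -/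
theorem mul_pow_four {x c d : Γ} (hd : d ∈ center Γ) (hd2 : d ^ 2 = 1) (hc : c * x = x * c * d) :
    (x * c) ^ 4 = x ^ 4 * c ^ 4 := by
  have hdc : ∀ g, g * d = d * g := mem_center_iff.1 hd
  have hcx : Commute (c ^ 2) (x ^ 2) := by
    have h1 : Commute c (x ^ 2) := by
      show c * x ^ 2 = x ^ 2 * c
      calc c * x ^ 2 = (c * x) * x := by rw [pow_two, mul_assoc]
        _ = x * c * (d * x) := by rw [hc, mul_assoc]
        _ = x * (c * x) * d := by rw [← hdc x]; simp only [mul_assoc]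
        _ = x ^ 2 * c * d ^ 2 := by rw [hc]; simp only [pow_two, mul_assoc]
        _ = x ^ 2 * c := by rw [hd2, mul_one]
    exact h1.pow_left 2
  have h2 : (x * c) ^ 2 = x ^ 2 * c ^ 2 * d := by
    calc (x * c) ^ 2 = x * (c * x) * c := by simp only [pow_two, mul_assoc]
      _ = x * x * c * (d * c) := by rw [hc]; simp only [mul_assoc]
      _ = x ^ 2 * c ^ 2 * d := by rw [← hdc c]; simp only [pow_two, mul_assoc]
  have h3 : Commute (x ^ 2 * c ^ 2) d := hdc _
  calc (x * c) ^ 4 = ((x * c) ^ 2) ^ 2 := by rw [← pow_mul]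
    _ = x ^ 4 * c ^ 4 := by
      rw [h2, h3.mul_pow, hd2, mul_one, hcx.symm.mul_pow, ← pow_mul, ← pow_mul]

/-- If `M` is powerfully embedded in `Γ` up to central elements, then `[M, Γ]` is powerfully
embedded in `Γ`. -/
theorem commutator_commutator_le [Finite Γ] (hΓ : IsPGroup 2 Γ) {M A : Subgroup Γ} [M.Normal]
    (hA : A ≤ center Γ) (hM : ⁅M, (⊤ : Subgroup Γ)⁆ ≤ pPow 2 2 M ⊔ A) :
    ⁅⁅M, (⊤ : Subgroup Γ)⁆, (⊤ : Subgroup Γ)⁆ ≤ pPow 2 2 ⁅M, (⊤ : Subgroup Γ)⁆ := by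
  refine le_of_forall_quotient hΓ fun Δ _ f hf h4 h2 hZ => ?_
  simp only [map_pPow, map_commutator_top hf] at h4 h2 hZ ⊢
  have hA' : A.map f ≤ center Δ := by
    rw [← commutator_top_right_eq_bot_iff_le_center] at hA ⊢
    rw [← map_commutator_top hf, hA, Subgroup.map_bot]
  have hM' := map_mono (f := f) hM
  rw [Subgroup.map_sup, map_pPow, map_commutator_top hf] at hM'
  generalize M.map f = P at *
  rw [commutator_top_right_eq_bot_iff_le_center] at hZ ⊢
  refine hM'.trans (sup_le (pPow_le_iff.2 fun x hx => mem_center_of_conj fun g => ?_) hA')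
  obtain ⟨c, hc, hgx⟩ := exists_conj_eq hx g
  obtain ⟨d, hd, hxc⟩ := exists_conj_eq hc x⁻¹
  have hd2 : d ^ 2 = 1 := pow_eq_one_of_pPow_eq_bot h2 hd
  have hc4 : c ^ 4 = 1 := pow_eq_one_of_pPow_eq_bot h4 hc
  have hcx : c * x = x * c * d := by
    rw [mul_assoc, ← hxc]; group
  show g * x ^ 4 * g⁻¹ = x ^ 4
  rw [← conj_pow, hgx, mul_pow_four (hZ hd) hd2 hcx, hc4, mul_one]

/-- If `H` is powerfully embedded in `Γ`, then so is `𝕌₁(H)`. -/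
theorem commutator_pPow_one_le [Finite Γ] (hΓ : IsPGroup 2 Γ) {H : Subgroup Γ} [H.Normal]
    (hH : ⁅H, (⊤ : Subgroup Γ)⁆ ≤ pPow 2 2 H) :
    ⁅pPow 2 1 H, (⊤ : Subgroup Γ)⁆ ≤ pPow 2 2 (pPow 2 1 H) := by
  refine le_of_forall_quotient hΓ fun Δ _ f hf h4 _ hZ => ?_
  have hN : (H.map f).Normal := Normal.map ‹_› f hf
  have hH' := map_mono (f := f) hH
  simp only [map_pPow, map_commutator_top hf] at h4 hZ hH' ⊢
  generalize H.map f = N at *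
  rw [commutator_top_right_eq_bot_iff_le_center] at hZ ⊢
  have hsq : ∀ {a : Δ}, a ∈ N → a ^ 2 ∈ pPow 2 1 N := fun ha => pow_mem_pPow (i := 1) ha
  have hle : pPow 2 2 N ≤ pPow 2 1 N := (pPow_two_le N).trans (pPow_le _ _ _)
  -- conjugating `a ^ 2` by `g` multiplies it by a central element of order dividing `4`
  have hconj : ∀ a ∈ N, ∀ g : Δ, ∃ z ∈ center Δ, z ^ 4 = 1 ∧ z ∈ ⁅N, (⊤ : Subgroup Δ)⁆ ∧
      g * a ^ 2 * g⁻¹ = a ^ 2 * z := by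
    intro a ha g
    obtain ⟨z, hz, hgz⟩ := exists_conj_eq (hsq ha) g
    exact ⟨z, hZ hz, pow_eq_one_of_pPow_eq_bot h4 (commutator_le_left (pPow 2 1 N) ⊤ hz),
      commutator_mono (pPow_le _ _ _) le_rfl hz, hgz⟩
  have hpow : ∀ {a z g : Δ}, z ∈ center Δ → g * a ^ 2 * g⁻¹ = a ^ 2 * z →
      g * a ^ 4 * g⁻¹ = a ^ 4 * z ^ 2 := by
    intro a z g hz hg
    have hc : Commute (a ^ 2) z := mem_center_iff.1 hz _
    have : a ^ 4 = (a ^ 2) ^ 2 := by rw [← pow_mul]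
    rw [this, ← conj_pow, hg, hc.mul_pow]
  have hcomm2 : ∀ a ∈ N, ∀ b ∈ N, Commute (a ^ 4) (b ^ 2) := by
    intro a ha b hb
    obtain ⟨z, hz, hz4, -, hbz⟩ := hconj a ha b
    have h1 := hpow hz hbz
    have hz2 : b * z ^ 2 * b⁻¹ = z ^ 2 := by
      rw [mem_center_iff.1 (pow_mem hz 2) b, mul_inv_cancel_right]
    have h2 : b ^ 2 * a ^ 4 * (b ^ 2)⁻¹ = a ^ 4 := by
      calc b ^ 2 * a ^ 4 * (b ^ 2)⁻¹
        _ = b * (b * a ^ 4 * b⁻¹) * b⁻¹ := by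
          simp only [pow_two b, mul_inv_rev, mul_assoc]
        _ = b * (a ^ 4 * z ^ 2) * b⁻¹ := by rw [h1]
        _ = (b * a ^ 4 * b⁻¹) * (b * z ^ 2 * b⁻¹) := conj_mul.symm
        _ = a ^ 4 * z ^ 4 := by rw [h1, hz2, mul_assoc, ← pow_add]
        _ = a ^ 4 := by rw [hz4, mul_one]
    exact (mul_inv_eq_iff_eq_mul.1 h2).symm
  -- hence `𝕌₂(N)` is abelian, and so of exponent `2`
  have hcomm : ∀ a ∈ N, ∀ y ∈ pPow 2 1 N, Commute (a ^ 4) y := by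
    intro a ha y hy
    have : pPow 2 1 N ≤ centralizer {a ^ 4} := pPow_le_iff.2 fun b hb =>
      mem_centralizer_singleton_iff.2 (hcomm2 a ha b hb).symm
    exact (mem_centralizer_singleton_iff.1 (this hy)).symm
  have hexp : ∀ x ∈ pPow 2 2 N, x ^ 2 = 1 := by
    intro x hx
    refine sq_eq_one_of_mem_closure ?_ ?_ hx
    · rintro _ ⟨a, ha, rfl⟩ y hy
      exact hcomm a ha y (hle hy)
    · rintro _ ⟨a, ha, rfl⟩
      have := pow_eq_one_of_pPow_eq_bot h4 (hsq ha)
      rw [← pow_mul] at this ⊢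
      exact this
  have hcen : pPow 2 2 N ≤ center Δ := by
    refine pPow_le_iff.2 fun a ha => mem_center_of_conj fun g => ?_
    obtain ⟨z, hz, -, hzN, hgz⟩ := hconj a ha g
    have := hpow hz hgz
    rwa [hexp z (hH' hzN), mul_one] at this
  refine pPow_le_iff.2 fun x hx => mem_center_of_conj fun g => ?_
  obtain ⟨c, hc, hgx⟩ := exists_conj_eq hx g
  have hxc : Commute x c := mem_center_iff.1 (hcen (hH' hc)) x
  rw [pow_one, ← conj_pow, hgx, hxc.mul_pow, hexp c (hH' hc), mul_one]

/-- When `𝕌ₙ(H)` is powerfully embedded, the squares of its elements generate the same subgroup as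
the `2 ^ (n + 1)`-th powers of elements of `H`. -/
theorem pPow_one_pPow [Finite Γ] (hΓ : IsPGroup 2 Γ) {H : Subgroup Γ} [H.Normal] {n : ℕ}
    (hH : ⁅pPow 2 n H, (⊤ : Subgroup Γ)⁆ ≤ pPow 2 2 (pPow 2 n H)) :
    pPow 2 1 (pPow 2 n H) = pPow 2 (n + 1) H := by
  apply le_antisymm
  · refine le_of_forall_quotient hΓ fun Δ _ f hf h1 h2 _ => ?_
    have hH' := map_mono (f := f) hH
    simp only [map_pPow, map_commutator_top hf] at h1 h2 hH' ⊢
    generalize H.map f = N at *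
    have h0 := le_bot_iff.1 (hH'.trans ((pPow_two_le _).trans h2.le))
    rw [commutator_top_right_eq_bot_iff_le_center] at h0
    rw [eq_bot_iff]
    refine pPow_le_iff.2 fun x hx => mem_bot.2 ?_
    refine sq_eq_one_of_mem_closure ?_ ?_ hx
    · exact fun x hx y _ => (mem_center_iff.1 (h0 (subset_closure hx)) y).symm
    · rintro _ ⟨a, ha, rfl⟩
      rw [← pow_mul, ← pow_succ]
      exact pow_eq_one_of_pPow_eq_bot h1 ha
  · refine pPow_le_iff.2 fun x hx => ?_
    rw [pow_succ, pow_mul]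
    exact pow_mem_pPow (i := 1) (pow_mem_pPow hx)

theorem commutator_pPow_le [Finite Γ] (hΓ : IsPGroup 2 Γ) {H : Subgroup Γ} [H.Normal]
    (hH : ⁅H, (⊤ : Subgroup Γ)⁆ ≤ pPow 2 2 H) (n : ℕ) :
    ⁅pPow 2 n H, (⊤ : Subgroup Γ)⁆ ≤ pPow 2 2 (pPow 2 n H) := by
  induction n with
  | zero =>
    have : pPow 2 0 H = H := by simp [pPow]
    rwa [this]
  | succ n ih =>
    rw [← pPow_one_pPow hΓ ih]
    exact commutator_pPow_one_le hΓ ih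

end Core

/-! ### The semidirect product of a relative central extension -/

section Transfer

open SemidirectProduct

variable {M G : Type*} [Group M] [Group G] {σ : M →* G} {N : Subgroup G}

/-- The right action `m ↦ m^g` of a relative central extension, turned into a left action by
automorphisms through `g • m = m^(g⁻¹)`. -/
def actHom (E : RelCentralExt σ N) : G →* MulAut M where
  toFun g :=
    { toFun := fun m => E.act m g⁻¹
      invFun := fun m => E.act m g
      left_inv := fun m => by beta_reduce; rw [E.act_act, inv_mul_cancel, E.act_one]
      right_inv := fun m => by beta_reduce; rw [E.act_act, mul_inv_cancel, E.act_one]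
      map_mul' := fun m n => E.act_mul m n _ }
  map_one' := by
    ext m
    show E.act m 1⁻¹ = m
    rw [inv_one, E.act_one]
  map_mul' g h := by
    ext m
    show E.act m (g * h)⁻¹ = E.act (E.act m h⁻¹) g⁻¹
    rw [E.act_act, mul_inv_rev]

theorem inl_act (E : RelCentralExt σ N) (m : M) (g : G) :
    (inl (E.act m g⁻¹) : M ⋊[actHom E] G) = inr g * inl m * (inr g)⁻¹ := by
  rw [← map_inv]
  exact inl_aut g m

theorem act_inv (E : RelCentralExt σ N) (m : M) (g : G) : E.act m⁻¹ g = (E.act m g)⁻¹ := by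
  have := map_inv (actHom E g⁻¹) m
  change E.act m⁻¹ g⁻¹⁻¹ = (E.act m g⁻¹⁻¹)⁻¹ at this
  rwa [inv_inv] at this

theorem inl_cmt (E : RelCentralExt σ N) (m : M) (g : G) :
    (inl (E.cmt m g) : M ⋊[actHom E] G) = ⁅(inl m⁻¹ : M ⋊[actHom E] G), (inr g⁻¹ : M ⋊[actHom E] G)⁆ := by
  have := inl_act E m g⁻¹
  rw [inv_inv] at this
  rw [RelCentralExt.cmt, map_mul, this, commutatorElement_def, map_inv, inv_inv]
  simp only [mul_assoc]

theorem map_commSub_le (E : RelCentralExt σ N) (P : Subgroup M) :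
    (E.commSub P).map (inl : M →* M ⋊[actHom E] G) ≤ ⁅P.map (inl : M →* M ⋊[actHom E] G), (⊤ : Subgroup (M ⋊[actHom E] G))⁆ := by
  unfold RelCentralExt.commSub
  rw [MonoidHom.map_closure, closure_le]
  rintro _ ⟨_, ⟨m, hm, g, rfl⟩, rfl⟩
  rw [inl_cmt]
  exact commutator_mem_commutator (mem_map_of_mem _ (inv_mem hm)) (mem_top _)

/-- `N*` acts on itself by conjugation through `σ`, so commutators with all of the semidirect
product are still `G`-commutators. -/
theorem map_commSub_top (E : RelCentralExt σ N) :
    (E.commSub ⊤).map (inl : M →* M ⋊[actHom E] G) =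
      ⁅(⊤ : Subgroup M).map (inl : M →* M ⋊[actHom E] G), (⊤ : Subgroup (M ⋊[actHom E] G))⁆ := by
  refine le_antisymm (map_commSub_le E ⊤) (commutator_le.2 ?_)
  rintro _ ⟨m, -, rfl⟩ x -
  refine ⟨E.cmt m⁻¹ (x.right⁻¹ * σ x.left⁻¹), subset_closure ⟨m⁻¹, trivial, _, rfl⟩, ?_⟩
  have hx : x = inl x.left * inr x.right := (inl_left_mul_inr_right x).symm
  have h1 : E.cmt m⁻¹ (x.right⁻¹ * σ x.left⁻¹) =
      m * (x.left * E.act m⁻¹ x.right⁻¹ * x.left⁻¹) := by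
    rw [RelCentralExt.cmt, ← E.act_act, E.act_sigma, inv_inv, inv_inv]
  rw [h1, map_mul, map_mul, map_mul, inl_act, commutatorElement_def, map_inv, map_inv]
  conv_rhs => rw [hx]
  rw [mul_inv_rev]
  simp only [mul_assoc]

/-- The kernel of `σ` is fixed by `G`, hence also centralized by `N*`, which acts through `σ`. -/
theorem map_ker_le_center (E : RelCentralExt σ N) :
    σ.ker.map (inl : M →* M ⋊[actHom E] G) ≤ center (M ⋊[actHom E] G) := by
  rintro _ ⟨a, ha, rfl⟩
  refine mem_center_of_conj fun x => ?_
  have h1 : (inr x.right * inl a * (inr x.right)⁻¹ : M ⋊[actHom E] G) = inl a := by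
    rw [← inl_act, E.ker_act a ha]
  have h2 : x.left * a * x.left⁻¹ = a := by
    have := E.act_sigma a x.left⁻¹
    rwa [E.ker_act a ha, inv_inv, eq_comm] at this
  conv_lhs => rw [← inl_left_mul_inr_right x]
  calc _ = inl x.left * (inr x.right * inl a * (inr x.right)⁻¹) * (inl x.left)⁻¹ := by
        rw [mul_inv_rev]; simp only [mul_assoc]
    _ = inl (x.left * a * x.left⁻¹) := by rw [h1, map_mul, map_mul, map_inv]
    _ = inl a := by rw [h2]

/-- The hypothesis on `N = σ(N*)` lifts to `N*` modulo the kernel of `σ`. -/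
theorem commSub_top_le (E : RelCentralExt σ N)
    (hpe : ⁅N, (⊤ : Subgroup G)⁆ ≤ pPow 2 2 N) :
    E.commSub ⊤ ≤ pPow 2 2 ⊤ ⊔ σ.ker := by
  rw [← comap_map_eq, ← map_le_iff_le_comap, map_pPow, ← MonoidHom.range_eq_map, E.range_eq]
  refine le_trans ?_ hpe
  unfold RelCentralExt.commSub
  rw [MonoidHom.map_closure, closure_le]
  rintro _ ⟨_, ⟨m, -, g, rfl⟩, rfl⟩
  have h : σ (E.cmt m g) = ⁅σ m⁻¹, g⁻¹⁆ := by
    rw [RelCentralExt.cmt, map_mul, E.sigma_act, commutatorElement_def, map_inv, inv_inv, inv_inv]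
    simp only [mul_assoc]
  rw [h]
  exact commutator_mem_commutator (E.range_eq ▸ ⟨m⁻¹, rfl⟩) (mem_top _)

theorem isPGroup_semidirect [Finite M] [Finite G] (hM : IsPGroup 2 M) (hG : IsPGroup 2 G)
    (φ : G →* MulAut M) : IsPGroup 2 (M ⋊[φ] G) := by
  have : Fact (Nat.Prime 2) := ⟨Nat.prime_two⟩
  obtain ⟨a, ha⟩ := hM.exists_card_eq
  obtain ⟨b, hb⟩ := hG.exists_card_eq
  exact IsPGroup.of_card (n := a + b) (by rw [SemidirectProduct.card, ha, hb, pow_add])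

end Transfer

end PowerfulCover

/-- Lemma 3.9(ii): let `(G, N)` be a pair of finite `2`-groups with `N` powerfully
embedded in `G` (`[N, G] ≤ 𝕌₂(N)`), and `σ : N* → G` a covering pair of `(G, N)`
(a relative central extension with `N*` a finite `2`-group and
`ker σ ≤ Z(N*, G) ∩ [N*, G]`; the `Z(N*, G)` part is axiom (iv) of a relative central
extension). Then `[𝕌ₙ([N*, G]), G] ≤ 𝕌₂(𝕌ₙ([N*, G]))` for every `n ≥ 0`. -/
theorem stmt_15 {G : Type*} [Group G] [Finite G]
    (hG : IsPGroup 2 G) (N : Subgroup G) (hN : N.Normal)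
    (hpe : ⁅N, (⊤ : Subgroup G)⁆ ≤ pPow 2 2 N)
    {Nstar : Type*} [Group Nstar] [Finite Nstar] (σ : Nstar →* G)
    (E : RelCentralExt σ N) (hNstar : IsPGroup 2 Nstar)
    (hker : σ.ker ≤ E.commSub ⊤) :
    ∀ n : ℕ, E.commSub (pPow 2 n (E.commSub ⊤)) ≤ pPow 2 2 (pPow 2 n (E.commSub ⊤)) := by
  intro n
  have : Finite (Nstar ⋊[PowerfulCover.actHom E] G) := Finite.of_equiv _ SemidirectProduct.equivProd.symm
  have hΓ := PowerfulCover.isPGroup_semidirect hNstar hG (PowerfulCover.actHom E)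
  let f : Nstar →* Nstar ⋊[PowerfulCover.actHom E] G := SemidirectProduct.inl
  have : ((⊤ : Subgroup Nstar).map f).Normal := by
    rw [← MonoidHom.range_eq_map]
    show (SemidirectProduct.inl : Nstar →* Nstar ⋊[PowerfulCover.actHom E] G).range.Normal
    rw [SemidirectProduct.range_inl_eq_ker_rightHom]
    infer_instance
  have hK : (E.commSub ⊤).map f = ⁅(⊤ : Subgroup Nstar).map f, (⊤ : Subgroup _)⁆ :=
    PowerfulCover.map_commSub_top E
  have h0 := Subgroup.map_mono (f := f) (PowerfulCover.commSub_top_le E hpe)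
  rw [hK, Subgroup.map_sup, PowerfulCover.map_pPow] at h0
  have h1 := PowerfulCover.commutator_pPow_le hΓ (PowerfulCover.commutator_commutator_le hΓ (PowerfulCover.map_ker_le_center E) h0) n
  rw [← hK, ← PowerfulCover.map_pPow, ← PowerfulCover.map_pPow] at h1
  exact (Subgroup.map_le_map_iff_of_injective SemidirectProduct.inl_injective).1 ((PowerfulCover.map_commSub_le E _).trans h1)
end

section
/- Let p be a prime, let (G,N) be a pair of finite p-groups with N powerfully embedded in G, and let σ : N* → G be a covering pair of (G,N) (a relative central extension with N* a finite p-group whose kernel A satisfies A ≤ Z(N*,G) ∩ [N*,G]). Then every element of [N*,G] has order dividing exp(N); in particular, every element of ker σ has order dividing exp(N). (This is the content of Theorem 3.11 of the paper: ker σ is isomorphic to the Schur multiplier M(G,N), so exp(M(G,N)) divides exp(N).) -/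
/-- The subgroup generated by the `p`-th powers of the elements of `K`. Iterating it, rather than
taking `p ^ i`-th powers at once, gives a descending series whose factors are easy to control. -/
def pw {Γ : Type*} [Group Γ] (p : ℕ) (K : Subgroup Γ) : Subgroup Γ :=
  Subgroup.closure {x | ∃ h ∈ K, x = h ^ p}

/-! ### Power subgroups, commutators and Hall's formula in class two -/

section Pw

open scoped commutatorElement

variable {Γ Δ : Type*} [Group Γ] [Group Δ] {p : ℕ}

lemma pow_mem_pw {K : Subgroup Γ} {x : Γ} (hx : x ∈ K) : x ^ p ∈ pw p K :=
  Subgroup.subset_closure ⟨x, hx, rfl⟩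

lemma pw_le_iff {K W : Subgroup Γ} : pw p K ≤ W ↔ ∀ x ∈ K, x ^ p ∈ W := by
  rw [pw, Subgroup.closure_le]
  constructor
  · intro h x hx
    exact h ⟨x, hx, rfl⟩
  · rintro h _ ⟨x, hx, rfl⟩
    exact h x hx

lemma pw_le (K : Subgroup Γ) : pw p K ≤ K :=
  pw_le_iff.2 fun _ hx => pow_mem hx p

lemma map_pw (f : Γ →* Δ) (K : Subgroup Γ) : (pw p K).map f = pw p (K.map f) := by
  rw [pw, pw, MonoidHom.map_closure]
  congr 1
  ext y
  constructor
  · rintro ⟨_, ⟨x, hx, rfl⟩, rfl⟩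
    exact ⟨f x, ⟨x, hx, rfl⟩, map_pow f x p⟩
  · rintro ⟨_, ⟨x, hx, rfl⟩, rfl⟩
    exact ⟨x ^ p, ⟨x, hx, rfl⟩, map_pow f x p⟩

instance pw_normal (K : Subgroup Γ) [hK : K.Normal] : (pw p K).Normal := by
  constructor
  intro n hn g
  have h1 : (pw p K).map (MulAut.conj g).toMonoidHom ≤ pw p K := by
    rw [map_pw, pw_le_iff]
    rintro _ ⟨y, hy, rfl⟩
    exact pow_mem_pw (hK.conj_mem y hy g)
  exact h1 ⟨n, hn, rfl⟩

lemma comm_top_eq_bot {K : Subgroup Γ} : ⁅K, (⊤ : Subgroup Γ)⁆ = ⊥ ↔ K ≤ Subgroup.center Γ := by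
  rw [Subgroup.commutator_eq_bot_iff_le_centralizer, Subgroup.coe_top, Subgroup.centralizer_univ]

lemma map_comm_top {f : Γ →* Δ} (hf : Function.Surjective f) (K : Subgroup Γ) :
    (⁅K, (⊤ : Subgroup Γ)⁆).map f = ⁅K.map f, (⊤ : Subgroup Δ)⁆ := by
  rw [Subgroup.map_commutator, Subgroup.map_top_of_surjective f hf]

lemma map_center_le {f : Γ →* Δ} (hf : Function.Surjective f) {Z : Subgroup Γ}
    (hZ : Z ≤ Subgroup.center Γ) : Z.map f ≤ Subgroup.center Δ := by
  rintro _ ⟨z, hz, rfl⟩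
  rw [Subgroup.mem_center_iff]
  intro g
  obtain ⟨g, rfl⟩ := hf g
  rw [← map_mul, ← map_mul, Subgroup.mem_center_iff.1 (hZ hz) g]

lemma map_mk_eq_bot {R X : Subgroup Γ} [R.Normal] :
    X.map (QuotientGroup.mk' R) = ⊥ ↔ X ≤ R := by
  rw [Subgroup.map_eq_bot_iff, QuotientGroup.ker_mk']

lemma comm_mem {K : Subgroup Γ} {x : Γ} (hx : x ∈ K) (g : Γ) :
    ⁅g, x⁆ ∈ ⁅K, (⊤ : Subgroup Γ)⁆ := by
  rw [Subgroup.commutator_comm]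
  exact Subgroup.commutator_mem_commutator (Subgroup.mem_top g) hx

/-- `⁅K, Γ⁆` is generated by the commutators `⁅g, x⁆ = (g x g⁻¹) x⁻¹`; this order of the factors
puts the correction term of a conjugate on the left. -/
lemma comm_le_iff {K W : Subgroup Γ} :
    ⁅K, (⊤ : Subgroup Γ)⁆ ≤ W ↔ ∀ x ∈ K, ∀ g : Γ, ⁅g, x⁆ ∈ W := by
  rw [Subgroup.commutator_comm, Subgroup.commutator_le]
  exact ⟨fun h x hx g => h g (Subgroup.mem_top g) x hx, fun h g _ x hx => h x hx g⟩

lemma pow_comm (g x : Γ) (n : ℕ) : (⁅g, x⁆ * x) ^ n = ⁅g, x ^ n⁆ * x ^ n := by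
  simp [commutatorElement_def, conj_pow]

lemma mem_center_of_comm {y : Γ} (h : ∀ g : Γ, ⁅g, y⁆ = 1) : y ∈ Subgroup.center Γ :=
  Subgroup.mem_center_iff.2 fun g => commutatorElement_eq_one_iff_mul_comm.1 (h g)

/-- Hall's collection formula when the commutator `⁅x⁻¹, c⁻¹⁆` is central. -/
lemma mul_pow_central {c x z : Γ} (hz : z ∈ Subgroup.center Γ) (h : x * c = c * x * z) (n : ℕ) :
    (c * x) ^ n = c ^ n * x ^ n * z ^ n.choose 2 := by
  have hzc : ∀ (k : ℕ) (g : Γ), g * z ^ k = z ^ k * g := fun k g =>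
    Subgroup.mem_center_iff.1 (pow_mem hz k) g
  have hx : ∀ n : ℕ, x ^ n * c = c * x ^ n * z ^ n := by
    intro n
    induction n with
    | zero => simp
    | succ n ih =>
      calc x ^ (n + 1) * c = x ^ n * (x * c) := by rw [pow_succ, mul_assoc]
        _ = x ^ n * c * (x * z) := by rw [h]; simp only [mul_assoc]
        _ = c * x ^ n * (z ^ n * x) * z := by rw [ih]; simp only [mul_assoc]
        _ = c * x ^ (n + 1) * z ^ (n + 1) := by
          rw [← hzc, pow_succ, pow_succ]; simp only [mul_assoc]
  induction n with
  | zero => simp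
  | succ n ih =>
    calc (c * x) ^ (n + 1) = c ^ n * x ^ n * (z ^ n.choose 2 * (c * x)) := by
          rw [pow_succ, ih]; simp only [mul_assoc]
      _ = c ^ n * (x ^ n * c) * x * z ^ n.choose 2 := by rw [← hzc]; simp only [mul_assoc]
      _ = c ^ n * c * x ^ n * (z ^ n * x) * z ^ n.choose 2 := by
          rw [hx]; simp only [mul_assoc]
      _ = c ^ (n + 1) * x ^ (n + 1) * z ^ (n + 1).choose 2 := by
          rw [← hzc, pow_succ, pow_succ, Nat.choose_succ_succ' n 1, pow_add, Nat.choose_one_right]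
          simp only [mul_assoc]

lemma mul_comm_corr (c x : Γ) : x * c = c * x * ⁅x⁻¹, c⁻¹⁆ := by
  simp [commutatorElement_def, mul_assoc]

/-- For odd `p` the `p`-th power is multiplicative on `c * x` once the commutator is central of
order dividing `p`, because then `p` divides `p.choose 2`. -/
lemma mul_pow_odd_s18 (hp : p.Prime) (h2 : p ≠ 2) {c x : Γ}
    (hz : ⁅x⁻¹, c⁻¹⁆ ∈ Subgroup.center Γ) (hzp : ⁅x⁻¹, c⁻¹⁆ ^ p = 1) :
    (c * x) ^ p = c ^ p * x ^ p := by
  obtain ⟨k, hk⟩ := hp.dvd_choose_self (k := 2) (by norm_num) (lt_of_le_of_ne hp.two_le h2.symm)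
  rw [mul_pow_central hz (mul_comm_corr c x), hk, pow_mul, hzp, one_pow, mul_one]

lemma mul_pow_two {c x : Γ} (hz : ⁅x⁻¹, c⁻¹⁆ ∈ Subgroup.center Γ) :
    (c * x) ^ 2 = c ^ 2 * x ^ 2 * ⁅x⁻¹, c⁻¹⁆ := by
  rw [mul_pow_central hz (mul_comm_corr c x)]; simp

lemma mul_pow_of_left_central {c x : Γ} (hc : c ∈ Subgroup.center Γ) (n : ℕ) :
    (c * x) ^ n = c ^ n * x ^ n :=
  Commute.mul_pow (Subgroup.mem_center_iff.1 hc x).symm n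

lemma pow_eq_one_of_pw {K : Subgroup Γ} (h : pw p K = ⊥) {x : Γ} (hx : x ∈ K) : x ^ p = 1 := by
  have := pow_mem_pw (p := p) hx
  rwa [h, Subgroup.mem_bot] at this

/-- If conjugation does not change `p`-th powers of elements of `K`, these powers are central. -/
lemma pw_le_center {K : Subgroup Γ}
    (h : ∀ x ∈ K, ∀ g : Γ, (⁅g, x⁆ * x) ^ p = x ^ p) : pw p K ≤ Subgroup.center Γ := by
  refine pw_le_iff.2 fun x hx => mem_center_of_comm fun g => ?_
  have := h x hx g
  rw [pow_comm] at this
  exact mul_eq_right.1 this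

end Pw

/-! ### A relative Frattini argument -/

section Frattini

variable {Γ : Type*} [Group Γ] [Finite Γ] {p : ℕ}

lemma eq_bot_of_le_comm [Fact p.Prime] (hΓ : IsPGroup p Γ) {X : Subgroup Γ}
    (h : X ≤ ⁅X, (⊤ : Subgroup Γ)⁆) : X = ⊥ := by
  have hn : Group.IsNilpotent Γ := hΓ.isNilpotent
  obtain ⟨n, hn⟩ := Subgroup.nilpotent_iff_lowerCentralSeries.1 hn
  rw [← le_bot_iff, ← hn]
  clear hn
  induction n with
  | zero => simp
  | succ n ih => exact h.trans (Subgroup.commutator_mono ih le_rfl)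

lemma eq_bot_of_central_le_pw (hΓ : IsPGroup p Γ) {X : Subgroup Γ}
    (hX : X ≤ Subgroup.center Γ) (h : X ≤ pw p X) : X = ⊥ := by
  have h1 : ∀ x ∈ X, ∃ y ∈ X, x = y ^ p := by
    intro x hx
    refine Subgroup.closure_induction (p := fun x _ => ∃ y ∈ X, x = y ^ p) ?_ ?_ ?_ ?_ (h hx)
    · exact fun x hx => hx
    · exact ⟨1, one_mem X, by simp⟩
    · rintro _ _ _ _ ⟨a, ha, rfl⟩ ⟨b, hb, rfl⟩
      exact ⟨a * b, mul_mem ha hb, (mul_pow_of_left_central (hX ha) p).symm⟩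
    · rintro _ _ ⟨a, ha, rfl⟩
      exact ⟨a⁻¹, inv_mem ha, by simp⟩
  have h2 : ∀ n : ℕ, ∀ x ∈ X, ∃ y ∈ X, x = y ^ p ^ n := by
    intro n
    induction n with
    | zero => exact fun x hx => ⟨x, hx, by simp⟩
    | succ n ih =>
      intro x hx
      obtain ⟨y, hy, rfl⟩ := ih x hx
      obtain ⟨z, hz, rfl⟩ := h1 y hy
      exact ⟨z, hz, by rw [← pow_mul, pow_succ']⟩
  rw [Subgroup.eq_bot_iff_forall]
  intro x hx
  by_contra hx1
  -- A uniform exponent for the finite group `Γ`: the product of the orders `p ^ k y`.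
  have h3 : ∃ n : ℕ, ∀ y : Γ, y ^ p ^ n = 1 := by
    classical
    have := Fintype.ofFinite Γ
    choose k hk using hΓ
    refine ⟨∑ y, k y, fun y => ?_⟩
    rw [← Finset.add_sum_erase _ _ (Finset.mem_univ y), pow_add, pow_mul, hk, one_pow]
  obtain ⟨n, hn⟩ := h3
  obtain ⟨y, -, rfl⟩ := h2 n x hx
  exact hx1 (hn y)

/-- A relative Frattini argument: in a finite `p`-group the normal subgroup `⁅X, Γ⁆ X ^ p` consists
of non-generators of the normal subgroup `X`. -/
lemma le_of_le_frattini [Fact p.Prime] (hΓ : IsPGroup p Γ) {X Y : Subgroup Γ} [X.Normal] [Y.Normal]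
    (h : X ≤ Y ⊔ ⁅X, (⊤ : Subgroup Γ)⁆ ⊔ pw p X) : X ≤ Y := by
  have key : X ≤ Y ⊔ ⁅X, (⊤ : Subgroup Γ)⁆ := by
    set R := Y ⊔ ⁅X, (⊤ : Subgroup Γ)⁆ with hR
    have hs := QuotientGroup.mk'_surjective R
    rw [← map_mk_eq_bot]
    apply eq_bot_of_central_le_pw (hΓ.to_quotient R)
    · rw [← comm_top_eq_bot, ← map_comm_top hs, map_mk_eq_bot]
      exact le_sup_right
    · have := Subgroup.map_mono (f := QuotientGroup.mk' R) h
      rwa [Subgroup.map_sup, map_mk_eq_bot.2 le_rfl, bot_sup_eq, map_pw] at this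
  have hs := QuotientGroup.mk'_surjective Y
  rw [← map_mk_eq_bot]
  apply eq_bot_of_le_comm (hΓ.to_quotient Y)
  have := Subgroup.map_mono (f := QuotientGroup.mk' Y) key
  rwa [Subgroup.map_sup, map_mk_eq_bot.2 le_rfl, bot_sup_eq, map_comm_top hs] at this

/-- To prove `X ≤ Y` one may pass to a quotient in which `Y` is trivial and `X` is central of
exponent dividing `p`. -/
lemma le_of_reduction [Fact p.Prime] (hΓ : IsPGroup p Γ) {X Y : Subgroup Γ} [X.Normal] [Y.Normal]
    (h : ∀ (R : Subgroup Γ) [R.Normal], Y.map (QuotientGroup.mk' R) = ⊥ →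
      X.map (QuotientGroup.mk' R) ≤ Subgroup.center (Γ ⧸ R) →
      pw p (X.map (QuotientGroup.mk' R)) = ⊥ → X.map (QuotientGroup.mk' R) = ⊥) : X ≤ Y := by
  refine le_of_le_frattini (p := p) hΓ (map_mk_eq_bot.1 (h _ ?_ ?_ ?_))
  · exact map_mk_eq_bot.2 (le_sup_left.trans le_sup_left)
  · rw [← comm_top_eq_bot, ← map_comm_top (QuotientGroup.mk'_surjective _), map_mk_eq_bot]
    exact le_sup_right.trans le_sup_left
  · rw [← map_pw, map_mk_eq_bot]
    exact le_sup_right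

end Frattini

/-! ### Powerful embedding -/

section Embedded

open scoped commutatorElement

variable {Γ : Type*} [Group Γ] {p : ℕ}

/-- `embedded_comm` for odd `p`, after the reduction: `⁅M, Γ⁆` has exponent `p`, so the `p`-th powers
of elements of `M` are central. -/
lemma core_A_odd (hp : p.Prime) (h2 : p ≠ 2) {M Z : Subgroup Γ} [M.Normal]
    (hZ : Z ≤ Subgroup.center Γ) (h : ⁅M, (⊤ : Subgroup Γ)⁆ ≤ pw p M ⊔ Z)
    (hY : pw p ⁅M, (⊤ : Subgroup Γ)⁆ = ⊥)
    (hX : ⁅⁅M, (⊤ : Subgroup Γ)⁆, (⊤ : Subgroup Γ)⁆ ≤ Subgroup.center Γ) :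
    ⁅⁅M, (⊤ : Subgroup Γ)⁆, (⊤ : Subgroup Γ)⁆ = ⊥ := by
  rw [comm_top_eq_bot]
  refine h.trans (sup_le (pw_le_center fun x hx g => ?_) hZ)
  have hc := comm_mem hx g
  have hz := comm_mem (inv_mem hc) x⁻¹
  rw [mul_pow_odd_s18 hp h2 (hX hz) (pow_eq_one_of_pw hY (Subgroup.commutator_le_left _ _ hz)),
    pow_eq_one_of_pw hY hc, one_mul]

/-- `embedded_pw` for odd `p`, after the reduction. -/
lemma core_B_odd (hp : p.Prime) (h2 : p ≠ 2) {K : Subgroup Γ} [K.Normal]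
    (h : ⁅K, (⊤ : Subgroup Γ)⁆ ≤ pw p K) (hY : pw p (pw p K) = ⊥)
    (hX : ⁅pw p K, (⊤ : Subgroup Γ)⁆ ≤ Subgroup.center Γ) :
    ⁅pw p K, (⊤ : Subgroup Γ)⁆ = ⊥ := by
  rw [comm_top_eq_bot]
  refine pw_le_center fun x hx g => ?_
  have hc := h (comm_mem hx g)
  have hz := comm_mem (inv_mem hc) x⁻¹
  rw [mul_pow_odd_s18 hp h2 (hX hz) (pow_eq_one_of_pw hY (Subgroup.commutator_le_left _ _ hz)),
    pow_eq_one_of_pw hY hc, one_mul]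

/-- Squares of elements of `K` are central if `⁅K, Γ⁆` is central of exponent `2`. -/
lemma pw_two_le_center {K : Subgroup Γ} (hX : ⁅K, (⊤ : Subgroup Γ)⁆ ≤ Subgroup.center Γ)
    (hY : pw 2 ⁅K, (⊤ : Subgroup Γ)⁆ = ⊥) : pw 2 K ≤ Subgroup.center Γ := by
  refine pw_le_center fun x hx g => ?_
  have hc := comm_mem hx g
  rw [mul_pow_of_left_central (hX hc), pow_eq_one_of_pw hY hc, one_mul]

/-- `embedded_comm` for `p = 2`, after the reduction: squares of elements of `pw 2 M` are central
because `⁅pw 2 M, Γ⁆` lies in a central subgroup of exponent `2`. -/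
lemma core_A_two {M Z : Subgroup Γ} [M.Normal]
    (hZ : Z ≤ Subgroup.center Γ) (h : ⁅M, (⊤ : Subgroup Γ)⁆ ≤ pw 2 (pw 2 M) ⊔ Z)
    (hY : pw 2 (pw 2 ⁅M, (⊤ : Subgroup Γ)⁆) = ⊥)
    (hX : ⁅⁅M, (⊤ : Subgroup Γ)⁆, (⊤ : Subgroup Γ)⁆ ≤ Subgroup.center Γ)
    (hXp : pw 2 ⁅⁅M, (⊤ : Subgroup Γ)⁆, (⊤ : Subgroup Γ)⁆ = ⊥) :
    ⁅⁅M, (⊤ : Subgroup Γ)⁆, (⊤ : Subgroup Γ)⁆ = ⊥ := by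
  rw [comm_top_eq_bot]
  have hL : pw 2 ⁅M, (⊤ : Subgroup Γ)⁆ ≤ Subgroup.center Γ := pw_two_le_center hX hXp
  set W := pw 2 ⁅M, (⊤ : Subgroup Γ)⁆ ⊔ ⁅⁅M, (⊤ : Subgroup Γ)⁆, (⊤ : Subgroup Γ)⁆ with hW
  have hWc : W ≤ Subgroup.center Γ := sup_le hL hX
  have hWp : ∀ d ∈ W, d ^ 2 = 1 := by
    intro d hd
    obtain ⟨u, hu, v, hv, rfl⟩ := Subgroup.mem_sup_of_normal_left.1 hd
    rw [mul_pow_of_left_central (hL hu), pow_eq_one_of_pw hY hu, pow_eq_one_of_pw hXp hv, one_mul]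
  have hMW : ⁅pw 2 M, (⊤ : Subgroup Γ)⁆ ≤ W := by
    -- `⁅P, ⊤⁆ ≤ W` says that `P` becomes central modulo `W`, which is tested on generators.
    rw [← map_mk_eq_bot, map_comm_top (QuotientGroup.mk'_surjective W), comm_top_eq_bot, map_pw]
    apply pw_le_center
    rintro _ ⟨x, hx, rfl⟩ g
    obtain ⟨g, rfl⟩ := QuotientGroup.mk'_surjective W g
    have hc := comm_mem hx g
    have hz := comm_mem (inv_mem hc) x⁻¹
    rw [← map_commutatorElement, ← map_mul, ← map_pow, ← map_pow, mul_pow_two (hX hz), mul_assoc,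
      map_mul, map_mul]
    have e1 : QuotientGroup.mk' W (⁅g, x⁆ ^ 2) = 1 :=
      (QuotientGroup.eq_one_iff _).2 ((le_sup_left : _ ≤ W) (pow_mem_pw hc))
    have e2 : QuotientGroup.mk' W ⁅x⁻¹, ⁅g, x⁆⁻¹⁆ = 1 :=
      (QuotientGroup.eq_one_iff _).2 ((le_sup_right : _ ≤ W) hz)
    rw [e1, e2, one_mul, mul_one]
  refine h.trans (sup_le (pw_le_center fun y hy g => ?_) hZ)
  have hd := hMW (comm_mem hy g)
  rw [mul_pow_of_left_central (hWc hd), hWp _ hd, one_mul]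

/-- `embedded_pw` for `p = 2`, after the reduction. -/
lemma core_B_two {K : Subgroup Γ} [K.Normal]
    (h : ⁅K, (⊤ : Subgroup Γ)⁆ ≤ pw 2 (pw 2 K)) (hY : pw 2 (pw 2 (pw 2 K)) = ⊥)
    (hX : ⁅pw 2 K, (⊤ : Subgroup Γ)⁆ ≤ Subgroup.center Γ)
    (hXp : pw 2 ⁅pw 2 K, (⊤ : Subgroup Γ)⁆ = ⊥) :
    ⁅pw 2 K, (⊤ : Subgroup Γ)⁆ = ⊥ := by
  rw [comm_top_eq_bot]
  have hc2 : pw 2 (pw 2 K) ≤ Subgroup.center Γ := pw_two_le_center hX hXp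
  refine pw_le_center fun x hx g => ?_
  have hc := h (comm_mem hx g)
  rw [mul_pow_of_left_central (hc2 hc), pow_eq_one_of_pw hY hc, one_mul]

/-- The subgroup that has to contain `⁅K, Γ⁆` for `K` to count as powerfully embedded: generated by
`p`-th powers for odd `p`, and by squares of elements of `pw 2 K` for `p = 2`. The latter contains
the subgroup generated by fourth powers, so this is implied by the usual condition. -/
def qw (p : ℕ) (K : Subgroup Γ) : Subgroup Γ := if p = 2 then pw p (pw p K) else pw p K

lemma qw_le_pw (K : Subgroup Γ) : qw p K ≤ pw p K := by
  unfold qw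
  split_ifs
  · exact pw_le _
  · exact le_rfl

variable [Finite Γ]

/-- If `⁅M, Γ⁆` lies in `qw p M` up to central elements, then `⁅M, Γ⁆` is powerfully embedded. -/
lemma embedded_comm (hp : p.Prime) (hΓ : IsPGroup p Γ) {M Z : Subgroup Γ} [M.Normal]
    (hZ : Z ≤ Subgroup.center Γ) (h : ⁅M, (⊤ : Subgroup Γ)⁆ ≤ qw p M ⊔ Z) :
    ⁅⁅M, (⊤ : Subgroup Γ)⁆, (⊤ : Subgroup Γ)⁆ ≤ qw p ⁅M, (⊤ : Subgroup Γ)⁆ := by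
  have := Fact.mk hp
  unfold qw at *
  split_ifs at * with h2
  · subst h2
    refine le_of_reduction (p := 2) hΓ fun R _ hY hX hXp => ?_
    have hs := QuotientGroup.mk'_surjective R
    have : (M.map (QuotientGroup.mk' R)).Normal := Subgroup.Normal.map inferInstance _ hs
    have h' := Subgroup.map_mono (f := QuotientGroup.mk' R) h
    simp only [Subgroup.map_sup, map_pw, map_comm_top hs] at h' hY hX hXp ⊢
    exact core_A_two (map_center_le hs hZ) h' hY hX hXp
  · refine le_of_reduction (p := p) hΓ fun R _ hY hX hXp => ?_
    have hs := QuotientGroup.mk'_surjective R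
    have : (M.map (QuotientGroup.mk' R)).Normal := Subgroup.Normal.map inferInstance _ hs
    have h' := Subgroup.map_mono (f := QuotientGroup.mk' R) h
    simp only [Subgroup.map_sup, map_pw, map_comm_top hs] at h' hY hX hXp ⊢
    exact core_A_odd hp h2 (map_center_le hs hZ) h' hY hX

/-- If `K` is powerfully embedded, so is `pw p K`. -/
lemma embedded_pw (hp : p.Prime) (hΓ : IsPGroup p Γ) {K : Subgroup Γ} [K.Normal]
    (h : ⁅K, (⊤ : Subgroup Γ)⁆ ≤ qw p K) :
    ⁅pw p K, (⊤ : Subgroup Γ)⁆ ≤ qw p (pw p K) := by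
  have := Fact.mk hp
  unfold qw at *
  split_ifs at * with h2
  · subst h2
    refine le_of_reduction (p := 2) hΓ fun R _ hY hX hXp => ?_
    have hs := QuotientGroup.mk'_surjective R
    have : (K.map (QuotientGroup.mk' R)).Normal := Subgroup.Normal.map inferInstance _ hs
    have h' := Subgroup.map_mono (f := QuotientGroup.mk' R) h
    simp only [map_pw, map_comm_top hs] at h' hY hX hXp ⊢
    exact core_B_two h' hY hX hXp
  · refine le_of_reduction (p := p) hΓ fun R _ hY hX hXp => ?_
    have hs := QuotientGroup.mk'_surjective R
    have : (K.map (QuotientGroup.mk' R)).Normal := Subgroup.Normal.map inferInstance _ hs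
    have h' := Subgroup.map_mono (f := QuotientGroup.mk' R) h
    simp only [map_pw, map_comm_top hs] at h' hY hX hXp ⊢
    exact core_B_odd hp h2 h' hY hX

end Embedded

/-! ### The iterated power series of a powerfully embedded subgroup -/

section Series

open scoped commutatorElement

variable {Γ : Type*} [Group Γ] {p : ℕ}

/-- The iterated power series `L, pw p L, pw p (pw p L), …`. -/
def pser (p : ℕ) (L : Subgroup Γ) : ℕ → Subgroup Γ
  | 0 => L
  | i + 1 => pw p (pser p L i)

instance pser_normal (L : Subgroup Γ) [L.Normal] (i : ℕ) : (pser p L i).Normal := by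
  induction i with
  | zero => assumption
  | succ i ih => exact pw_normal _

lemma pser_succ_le (L : Subgroup Γ) (i : ℕ) : pser p L (i + 1) ≤ pser p L i := pw_le _

lemma pow_mem_pser {L : Subgroup Γ} {x : Γ} (hx : x ∈ L) (i : ℕ) : x ^ p ^ i ∈ pser p L i := by
  induction i with
  | zero => simpa [pser] using hx
  | succ i ih =>
    rw [pow_succ, pow_mul]
    exact pow_mem_pw ih

lemma embedded_pser [Finite Γ] (hp : p.Prime) (hΓ : IsPGroup p Γ) {L : Subgroup Γ} [L.Normal]
    (h : ⁅L, (⊤ : Subgroup Γ)⁆ ≤ qw p L) (i : ℕ) :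
    ⁅pser p L i, (⊤ : Subgroup Γ)⁆ ≤ qw p (pser p L i) := by
  induction i with
  | zero => exact h
  | succ i ih => exact embedded_pw hp hΓ ih

/-- Modulo `pser p L (i + 1)`, elements of `pser p L i` are central. -/
lemma mk_central {L : Subgroup Γ} [L.Normal]
    (h : ∀ i, ⁅pser p L i, (⊤ : Subgroup Γ)⁆ ≤ qw p (pser p L i)) {i : ℕ} {w : Γ}
    (hw : w ∈ pser p L i) :
    (w : Γ ⧸ pser p L (i + 1)) ∈ Subgroup.center (Γ ⧸ pser p L (i + 1)) := by
  have hs := QuotientGroup.mk'_surjective (pser p L (i + 1))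
  have : (pser p L i).map (QuotientGroup.mk' (pser p L (i + 1))) ≤ Subgroup.center _ := by
    rw [← comm_top_eq_bot, ← map_comm_top hs, map_mk_eq_bot]
    exact (h i).trans (qw_le_pw _)
  exact this ⟨w, hw, rfl⟩

lemma mk_pow_eq_one {L : Subgroup Γ} [L.Normal] {i : ℕ} {w : Γ} (hw : w ∈ pser p L i) :
    (w : Γ ⧸ pser p L (i + 1)) ^ p = 1 := by
  rw [← QuotientGroup.mk_pow, QuotientGroup.eq_one_iff]
  exact pow_mem_pw hw

/-- Modulo `pser p L (i + 2)`, the `p`-th power map is multiplicative on products whose left factor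
lies in `pser p L i`. -/
lemma mk_mul_pow_s18 (hp : p.Prime) {L : Subgroup Γ} [L.Normal]
    (h : ∀ i, ⁅pser p L i, (⊤ : Subgroup Γ)⁆ ≤ qw p (pser p L i)) {i : ℕ} {a : Γ}
    (ha : a ∈ pser p L i) (b : Γ) :
    ((a : Γ ⧸ pser p L (i + 2)) * b) ^ p = (a : Γ ⧸ pser p L (i + 2)) ^ p * b ^ p := by
  have hz : ⁅b⁻¹, a⁻¹⁆ ∈ qw p (pser p L i) := h i (comm_mem (inv_mem ha) b⁻¹)
  have hz1 : ⁅b⁻¹, a⁻¹⁆ ∈ pser p L (i + 1) := qw_le_pw _ hz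
  have e : (⁅(b : Γ ⧸ pser p L (i + 2))⁻¹, (a : Γ ⧸ pser p L (i + 2))⁻¹⁆ : Γ ⧸ pser p L (i + 2))
      = ((⁅b⁻¹, a⁻¹⁆ : Γ) : Γ ⧸ pser p L (i + 2)) :=
    (map_commutatorElement (QuotientGroup.mk' (pser p L (i + 2))) b⁻¹ a⁻¹).symm
  by_cases h2 : p = 2
  · -- For `p = 2` the commutator already vanishes modulo `pser 2 L (i + 2)`.
    have h3 : ((⁅b⁻¹, a⁻¹⁆ : Γ) : Γ ⧸ pser p L (i + 2)) = 1 := by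
      rw [QuotientGroup.eq_one_iff]
      rwa [qw, if_pos h2] at hz
    rw [h3] at e
    have := mul_pow_central (Subgroup.one_mem _)
      (e ▸ mul_comm_corr (a : Γ ⧸ pser p L (i + 2)) b) p
    simpa using this
  · refine mul_pow_odd_s18 hp h2 ?_ ?_
    · rw [e]; exact mk_central h hz1
    · rw [e]; exact mk_pow_eq_one hz1

/-- A congruence modulo `pser p L (i + 1)` becomes one modulo `pser p L (i + 2)` after taking
`p`-th powers. -/
lemma mk_pow_congr {L : Subgroup Γ} [L.Normal]
    (h : ∀ i, ⁅pser p L i, (⊤ : Subgroup Γ)⁆ ≤ qw p (pser p L i)) {i : ℕ} {a b : Γ}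
    (hab : (a : Γ ⧸ pser p L (i + 1)) = b) :
    (a : Γ ⧸ pser p L (i + 2)) ^ p = (b : Γ ⧸ pser p L (i + 2)) ^ p := by
  have hw : b * a⁻¹ ∈ pser p L (i + 1) := by
    rw [← QuotientGroup.eq_one_iff, QuotientGroup.mk_mul, QuotientGroup.mk_inv, hab, mul_inv_cancel]
  have hb : (b : Γ ⧸ pser p L (i + 2)) = ((b * a⁻¹ : Γ) : Γ ⧸ pser p L (i + 2)) * a := by
    rw [← QuotientGroup.mk_mul, inv_mul_cancel_right]
  rw [hb, mul_pow_of_left_central (mk_central h hw), mk_pow_eq_one hw, one_mul]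

/-- `l ↦ l ^ p ^ i` induces a homomorphism from `L` to `pser p L i / pser p L (i + 1)`. -/
lemma mk_mul_pow_pow (hp : p.Prime) {L : Subgroup Γ} [L.Normal]
    (h : ∀ i, ⁅pser p L i, (⊤ : Subgroup Γ)⁆ ≤ qw p (pser p L i)) {a b : Γ}
    (ha : a ∈ L) (i : ℕ) :
    (((a * b) ^ p ^ i : Γ) : Γ ⧸ pser p L (i + 1)) = ((a ^ p ^ i * b ^ p ^ i : Γ) : Γ ⧸ _) := by
  induction i with
  | zero => simp
  | succ i ih =>
    have h1 := mk_pow_congr h ih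
    rw [QuotientGroup.mk_mul, mk_mul_pow_s18 hp h (pow_mem_pser ha i)] at h1
    simpa only [← QuotientGroup.mk_pow, ← QuotientGroup.mk_mul, ← pow_mul, ← pow_succ] using h1

lemma exists_pow_of_mem_pser (hp : p.Prime) {L : Subgroup Γ} [L.Normal]
    (h : ∀ i, ⁅pser p L i, (⊤ : Subgroup Γ)⁆ ≤ qw p (pser p L i)) (i : ℕ) :
    ∀ y ∈ pser p L i, ∃ l ∈ L, (y : Γ ⧸ pser p L (i + 1)) = ((l ^ p ^ i : Γ) : Γ ⧸ _) := by
  induction i with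
  | zero => exact fun y hy => ⟨y, hy, by simp⟩
  | succ i ih =>
    have hmul : ∀ a ∈ L, ∀ b ∈ L, (((a * b) ^ p ^ (i + 1) : Γ) : Γ ⧸ pser p L (i + 2)) =
      ((a ^ p ^ (i + 1) * b ^ p ^ (i + 1) : Γ) : Γ ⧸ _) := fun a ha b _ =>
        mk_mul_pow_pow hp h ha (i + 1)
    intro y hy
    refine Subgroup.closure_induction (p := fun (y : Γ) _ => ∃ l ∈ L,
      ((y : Γ) : Γ ⧸ pser p L (i + 2)) = ((l ^ p ^ (i + 1) : Γ) : Γ ⧸ _)) ?_ ?_ ?_ ?_ hy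
    · rintro _ ⟨u, hu, rfl⟩
      obtain ⟨l, hl, e⟩ := ih u hu
      refine ⟨l, hl, ?_⟩
      rw [QuotientGroup.mk_pow, mk_pow_congr h e, ← QuotientGroup.mk_pow, ← pow_mul, ← pow_succ]
    · exact ⟨1, one_mem L, by simp⟩
    · rintro y z _ _ ⟨a, ha, ea⟩ ⟨b, hb, eb⟩
      refine ⟨a * b, mul_mem ha hb, ?_⟩
      rw [hmul a ha b hb, QuotientGroup.mk_mul, QuotientGroup.mk_mul, ea, eb]
    · rintro y _ ⟨a, ha, ea⟩
      exact ⟨a⁻¹, inv_mem ha, by rw [QuotientGroup.mk_inv, ea, ← QuotientGroup.mk_inv, inv_pow]⟩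

/-- `⁅g, x ^ p ^ i⁆` agrees with `⁅g, x⁆ ^ p ^ i` up to the next term of the series. -/
lemma mk_comm_pow (hp : p.Prime) {L : Subgroup Γ} [L.Normal]
    (h : ∀ i, ⁅pser p L i, (⊤ : Subgroup Γ)⁆ ≤ qw p (pser p L i)) {g x : Γ}
    (hc : ⁅g, x⁆ ∈ L) (i : ℕ) :
    ⁅g, x ^ p ^ i⁆ ∈ pser p L i ∧
      ((⁅g, x ^ p ^ i⁆ : Γ) : Γ ⧸ pser p L (i + 1)) = ((⁅g, x⁆ ^ p ^ i : Γ) : Γ ⧸ _) := by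
  induction i with
  | zero => exact ⟨by simpa [pser] using hc, by simp⟩
  | succ i ih =>
    obtain ⟨hm, e⟩ := ih
    have h1 : ((⁅g, x ^ p ^ (i + 1)⁆ : Γ) : Γ ⧸ pser p L (i + 2)) =
        ((⁅g, x⁆ ^ p ^ (i + 1) : Γ) : Γ ⧸ _) := by
      have h2 := mk_mul_pow_s18 hp h hm (x ^ p ^ i)
      rw [← QuotientGroup.mk_mul, ← QuotientGroup.mk_pow, pow_comm, mk_pow_congr h e] at h2
      rw [QuotientGroup.mk_mul, ← QuotientGroup.mk_pow, ← QuotientGroup.mk_pow, ← pow_mul,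
        ← pow_mul, ← pow_succ] at h2
      exact mul_right_cancel h2
    refine ⟨?_, h1⟩
    have h3 := pser_succ_le (p := p) L (i + 1) (QuotientGroup.eq.1 h1.symm)
    have h4 : ⁅g, x⁆ ^ p ^ (i + 1) ∈ pser p L (i + 1) := pow_mem_pser hc (i + 1)
    simpa using mul_mem h4 h3

/-- The group-theoretic core: `M` is a normal subgroup of a finite `p`-group which is powerfully
embedded and of exponent dividing `p ^ k` up to central elements. -/
theorem comm_pow_eq_one [Finite Γ] (hp : p.Prime) (hΓ : IsPGroup p Γ) {M Z : Subgroup Γ}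
    [M.Normal] (hZ : Z ≤ Subgroup.center Γ) (h : ⁅M, (⊤ : Subgroup Γ)⁆ ≤ qw p M ⊔ Z) {k : ℕ}
    (hk : ∀ x ∈ M, x ^ p ^ k ∈ Subgroup.center Γ) :
    ∀ l ∈ ⁅M, (⊤ : Subgroup Γ)⁆, l ^ p ^ k = 1 := by
  have := Fact.mk hp
  set L := ⁅M, (⊤ : Subgroup Γ)⁆ with hL
  have hE := embedded_pser hp hΓ (embedded_comm hp hΓ hZ h)
  rw [← hL] at hE
  let S : Subgroup Γ :=
    { carrier := {l | l ∈ L ∧ l ^ p ^ k ∈ pser p L (k + 1)}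
      one_mem' := ⟨one_mem _, by simp⟩
      mul_mem' := by
        rintro a b ⟨ha, ha'⟩ ⟨hb, hb'⟩
        refine ⟨mul_mem ha hb, ?_⟩
        have := mk_mul_pow_pow hp hE (b := b) ha k
        rw [← QuotientGroup.eq_one_iff, this, QuotientGroup.eq_one_iff]
        exact mul_mem ha' hb'
      inv_mem' := by
        rintro a ⟨ha, ha'⟩
        refine ⟨inv_mem ha, ?_⟩
        rw [inv_pow]
        exact inv_mem ha' }
  have hS : L ≤ S := by
    rw [hL, comm_le_iff]
    intro x hx g
    have hc : ⁅g, x⁆ ∈ L := comm_mem hx g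
    refine ⟨hc, ?_⟩
    have h1 := (mk_comm_pow hp hE hc k).2
    have h2 : ⁅g, x ^ p ^ k⁆ = 1 :=
      commutatorElement_eq_one_iff_mul_comm.2 (Subgroup.mem_center_iff.1 (hk x hx) g)
    rw [← QuotientGroup.eq_one_iff, ← h1, h2, QuotientGroup.mk_one]
  have hle : pser p L k ≤ pser p L (k + 1) := by
    intro y hy
    obtain ⟨l, hl, e⟩ := exists_pow_of_mem_pser hp hE k y hy
    rw [← QuotientGroup.eq_one_iff, e, QuotientGroup.eq_one_iff]
    exact (hS hl).2
  have hbot : pser p L k ≤ ⊥ := le_of_le_frattini (p := p) hΓ (hle.trans le_sup_right)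
  exact fun l hl => hbot (pow_mem_pser hl k)

end Series

/-! ### The semidirect product of a relative central extension -/

section Semidirect

open scoped commutatorElement

namespace RelCentralExt

variable {M G : Type*} [Group M] [Group G] {σ : M →* G} {N : Subgroup G}

/-- The left action of `G` on `M` attached to a relative central extension; the right action
`m ↦ m ^ g` is turned into a left one by inverting `g`. -/
def toAut (E : RelCentralExt σ N) : G →* MulAut M where
  toFun g :=
    { toFun := fun m => E.act m g⁻¹
      invFun := fun m => E.act m g
      left_inv := fun m => by simp [E.act_act, E.act_one]
      right_inv := fun m => by simp [E.act_act, E.act_one]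
      map_mul' := fun m n => E.act_mul m n _ }
  map_one' := by ext m; simp [E.act_one]
  map_mul' g h := by ext m; simp [E.act_act]

/-- The homomorphism `(m, g) ↦ σ m * g` from the semidirect product `M ⋊ G` to `G`. -/
def toBase (E : RelCentralExt σ N) : M ⋊[E.toAut] G →* G :=
  SemidirectProduct.lift σ (MonoidHom.id G) fun g => by
    ext m
    simp [toAut, E.sigma_act]

@[simp] lemma toBase_inl (E : RelCentralExt σ N) (m : M) :
    E.toBase (SemidirectProduct.inl m) = σ m := by
  simp [toBase]

lemma inl_central (E : RelCentralExt σ N) {a : M} (ha : a ∈ σ.ker) :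
    (SemidirectProduct.inl a : M ⋊[E.toAut] G) ∈ Subgroup.center _ := by
  rw [Subgroup.mem_center_iff]
  intro h
  have h1 : ∀ m : M, m * a = a * m := by
    intro m
    have := E.act_sigma a m
    rw [E.ker_act a ha] at this
    nth_rewrite 1 [this]
    group
  have h2 : E.toAut h.right a = a := E.ker_act a ha _
  ext
  · rw [SemidirectProduct.mul_left, SemidirectProduct.mul_left, SemidirectProduct.left_inl,
      SemidirectProduct.right_inl, map_one, MulAut.one_apply, h2, h1]
  · simp

lemma inl_cmt (E : RelCentralExt σ N) (m : M) (g : G) :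
    (SemidirectProduct.inl (E.cmt m g) : M ⋊[E.toAut] G) =
      ⁅(SemidirectProduct.inl m⁻¹ : M ⋊[E.toAut] G), SemidirectProduct.inr g⁻¹⁆ := by
  have h : E.cmt m g = m⁻¹ * E.toAut g⁻¹ m := by simp [cmt, toAut]
  rw [h, map_mul, SemidirectProduct.inl_aut, commutatorElement_def]
  simp [mul_assoc]

end RelCentralExt

end Semidirect

/-! ### The exponent of the commutator subgroup -/

/-- Theorem 3.11: let `p` be a prime, `(G, N)` a pair of finite `p`-groups with `N`
powerfully embedded in `G` (`[N, G] ≤ 𝕌₁(N)` for odd `p`, `[N, G] ≤ 𝕌₂(N)` for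
`p = 2`), and `σ : N* → G` a covering pair of `(G, N)` (a relative central extension
with `N*` a finite `p`-group and `ker σ ≤ Z(N*, G) ∩ [N*, G]`; the `Z(N*, G)` part is
axiom (iv) of a relative central extension). Then every element of `[N*, G]` has order
dividing `exp N`; in particular every element of `ker σ ≅ M(G, N)` does. -/
theorem stmt_18 {G : Type*} [Group G] [Finite G] (p : ℕ) (hp : p.Prime)
    (hG : IsPGroup p G) (N : Subgroup G) (hN : N.Normal)
    (hpe₂ : p = 2 → ⁅N, (⊤ : Subgroup G)⁆ ≤ pPow 2 2 N)
    (hpeodd : p ≠ 2 → ⁅N, (⊤ : Subgroup G)⁆ ≤ pPow p 1 N)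
    {Nstar : Type*} [Group Nstar] [Finite Nstar] (σ : Nstar →* G)
    (E : RelCentralExt σ N) (hNstar : IsPGroup p Nstar)
    (hker : σ.ker ≤ E.commSub ⊤) :
    (∀ x ∈ E.commSub ⊤, x ^ Monoid.exponent ↥N = 1) ∧
      (∀ a ∈ σ.ker, a ^ Monoid.exponent ↥N = 1) := by
  suffices H : ∀ x ∈ E.commSub ⊤, x ^ Monoid.exponent ↥N = 1 from ⟨H, fun a ha => H a (hker ha)⟩
  have := Fact.mk hp
  let Γ := Nstar ⋊[E.toAut] G
  have : Finite Γ := Finite.of_equiv _ SemidirectProduct.equivProd.symm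
  have hΓ : IsPGroup p Γ := by
    obtain ⟨a, ha⟩ := IsPGroup.iff_card.1 hG
    obtain ⟨b, hb⟩ := IsPGroup.iff_card.1 hNstar
    refine IsPGroup.of_card (n := b + a) ?_
    rw [SemidirectProduct.card, ha, hb, pow_add]
  let M : Subgroup Γ := (SemidirectProduct.inl : Nstar →* Γ).range
  have hM : M.Normal := by
    have : M = (SemidirectProduct.rightHom : Γ →* G).ker :=
      SemidirectProduct.range_inl_eq_ker_rightHom
    rw [this]
    infer_instance
  let Z : Subgroup Γ := σ.ker.map SemidirectProduct.inl
  have hZ : Z ≤ Subgroup.center Γ := by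
    rintro _ ⟨a, ha, rfl⟩
    exact E.inl_central ha
  have hMN : M.map E.toBase = N := by
    refine Eq.trans ?_ E.range_eq
    rw [MonoidHom.map_range]
    congr 1
    ext m
    simp
  have hZmem : ∀ y ∈ M, E.toBase y = 1 → y ∈ Z := by
    rintro _ ⟨m, rfl⟩ h
    exact ⟨m, by simpa using h, rfl⟩
  have hNq : ⁅N, (⊤ : Subgroup G)⁆ ≤ qw p N := by
    unfold qw
    split_ifs with h2
    · refine (hpe₂ h2).trans ?_
      subst h2
      rw [pPow, Subgroup.closure_le]
      rintro _ ⟨x, hx, rfl⟩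
      rw [pow_two 2, pow_mul]
      exact pow_mem_pw (pow_mem_pw hx)
    · simpa [pPow, pw] using hpeodd h2
  have hqmap : (qw p M).map E.toBase = qw p N := by
    unfold qw
    split_ifs <;> simp only [map_pw, hMN]
  have hqM : qw p M ≤ M := (qw_le_pw M).trans (pw_le M)
  have hL : ⁅M, (⊤ : Subgroup Γ)⁆ ≤ qw p M ⊔ Z := by
    intro x hx
    have h1 : E.toBase x ∈ (qw p M).map E.toBase := by
      rw [hqmap]
      apply hNq
      have : (⁅M, (⊤ : Subgroup Γ)⁆).map E.toBase ≤ ⁅N, (⊤ : Subgroup G)⁆ := by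
        rw [Subgroup.map_commutator, hMN]
        exact Subgroup.commutator_mono le_rfl le_top
      exact this ⟨x, hx, rfl⟩
    obtain ⟨y, hy, e⟩ := h1
    have h2 : y⁻¹ * x ∈ Z := by
      refine hZmem _ (mul_mem (inv_mem (hqM hy)) (Subgroup.commutator_le_left _ _ hx)) ?_
      rw [map_mul, map_inv, e, inv_mul_cancel]
    rw [← mul_inv_cancel_left y x]
    exact Subgroup.mul_mem_sup hy h2
  obtain ⟨k, hk⟩ : ∃ k, Monoid.exponent ↥N = p ^ k := by
    obtain ⟨n, hn⟩ := IsPGroup.iff_card.1 (hG.to_subgroup N)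
    have hd := Group.exponent_dvd_nat_card (G := ↥N)
    rw [hn] at hd
    obtain ⟨k, -, h⟩ := (Nat.dvd_prime_pow hp).1 hd
    exact ⟨k, h⟩
  have hMk : ∀ x ∈ M, x ^ p ^ k ∈ Subgroup.center Γ := by
    intro x hx
    refine hZ (hZmem _ (pow_mem hx _) ?_)
    have h1 : E.toBase x ∈ N := hMN.le ⟨x, hx, rfl⟩
    have h2 := Monoid.pow_exponent_eq_one (⟨_, h1⟩ : N)
    rw [hk] at h2
    rw [map_pow]
    exact congrArg Subtype.val h2
  have hmain := comm_pow_eq_one hp hΓ hZ hL hMk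
  have hsub : (E.commSub ⊤).map (SemidirectProduct.inl : Nstar →* Γ) ≤ ⁅M, (⊤ : Subgroup Γ)⁆ := by
    rw [Subgroup.map_le_iff_le_comap, RelCentralExt.commSub, Subgroup.closure_le]
    rintro _ ⟨m, -, g, rfl⟩
    change (SemidirectProduct.inl (E.cmt m g) : Γ) ∈ ⁅M, (⊤ : Subgroup Γ)⁆
    rw [E.inl_cmt]
    exact Subgroup.commutator_mem_commutator ⟨m⁻¹, rfl⟩ (Subgroup.mem_top _)
  intro x hx
  rw [hk]
  apply SemidirectProduct.inl_injective (φ := E.toAut)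
  rw [map_pow, map_one]
  exact hmain _ (hsub ⟨x, hx, rfl⟩)
end
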